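/- arXiv:1011.2157 — 2 statements merged into one kernel-verified Lean document; each statement's English description precedes it below -/
import Mathlib

section
/- Let 2 ≤ l ≤ n−1, let u = x_1 x_{l+1}^{a_{l+1}}⋯x_n^{a_n} and v = x_l x_n^{d−1} be monomials of degree d with u ≥_lex v, and let I = (L(u,v)) be the corresponding lexsegment ideal (a lexsegment ideal with linear resolution which is not a completely lexsegment ideal). Then for every N ≥ 1 the power I^N has linear quotients with respect to the order of its minimal monomial generators in which the generators are listed in increasing reverse lexicographic order (i.e., w comes before w' whenever w <_revlex w'). -/
/-!
Call the degree of a monomial in `x_1,…,x_l` its head degree. The lexsegment `L(u,v)` consists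
of the degree-`d` monomials that are either `x_1` times a monomial in `x_{l+1},…,x_n` and
`≤_lex u`, or free of `x_1` and divisible by one of `x_2,…,x_l` (`mem_LSeg_iff`). In particular
every element has head degree at least `1`, and those of head degree at least `2` are free of `x_1`.

Let `m` and `w` be products of `N` such monomials with `m <_revlex w`, and let `s` be the last
index at which they differ, so `w_s < m_s`. It suffices to find `p < s` and a factor of `w` in which
`x_p` may be replaced by `x_s` without leaving `L(u,v)` (`exchange_witness`).

* If `s ≤ l`, equality of degrees gives `p < s` with `w_p > m_p`, and replacing `x_p` by `x_s` in a
  factor containing `x_p` gives a monomial free of `x_1` and divisible by `x_s`.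
* If `s > l` and `x_p ∣ w` for some `l < p < s`, the replacement only lowers the factor
  lexicographically and leaves the head unchanged.
* Otherwise `w` has smaller degree than `m` in `x_{l+1},…,x_n`, so its head degree exceeds that of
  `m`, which is at least `N`. Hence some factor has head degree at least `2`; it contains some
  `x_p` with `2 ≤ p ≤ l`, and its head degree remains positive after the replacement.
-/

/-- Monomials of `K[x_1,…,x_n]`, encoded by their exponent vectors (`x_1` ↔ index `0`). -/
abbrev Mon (n : ℕ) := Fin n →₀ ℕ

/-- Total degree of a monomial. -/
def mdeg {n : ℕ} (m : Mon n) : ℕ := ∑ i, m i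

/-- `m <_lex m'` (so `m' >_lex m`) with `x_1 > x_2 > ⋯ > x_n`: at the first index where the
exponent vectors differ, `m'` has the larger exponent. -/
def LexLT {n : ℕ} (m m' : Mon n) : Prop :=
  ∃ i : Fin n, (∀ j, j < i → m j = m' j) ∧ m i < m' i

/-- `m ≤_lex m'`. -/
def LexLE {n : ℕ} (m m' : Mon n) : Prop := m = m' ∨ LexLT m m'

/-- `m >_revlex m'` for monomials of equal degree: at the last index where the exponent
vectors differ, `m` has the smaller exponent. -/
def RevLexGT {n : ℕ} (m m' : Mon n) : Prop :=
  ∃ s : Fin n, (∀ t, s < t → m t = m' t) ∧ m s < m' s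

/-- The decreasing revlexicographic order on monomials: `m <_σ m'` iff `deg m < deg m'`, or
the degrees agree and `m >_revlex m'`. -/
def DecRevLexLT {n : ℕ} (m m' : Mon n) : Prop :=
  mdeg m < mdeg m' ∨ (mdeg m = mdeg m' ∧ RevLexGT m m')

/-- The lexsegment set `L(u,v) = {w ∈ M_d : u ≥_lex w ≥_lex v}`. -/
def LSeg {n : ℕ} (u v : Mon n) (d : ℕ) : Set (Mon n) :=
  {w | mdeg w = d ∧ LexLE w u ∧ LexLE v w}

/-- `A` is a lexsegment set inside `M_e`. -/
def IsLexSegmentSet {n : ℕ} (A : Set (Mon n)) (e : ℕ) : Prop :=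
  ∃ u v : Mon n, mdeg u = e ∧ mdeg v = e ∧ LexLE v u ∧ A = LSeg u v e

/-- `(L(u,v))` is a completely lexsegment ideal: for every `k ≥ 0` the `k`-th shadow
`{m·w : m ∈ M_k, w ∈ L(u,v)}` is a lexsegment set in `M_{d+k}`. -/
def IsCompletelyLex {n : ℕ} (u v : Mon n) (d : ℕ) : Prop :=
  ∀ k : ℕ,
    IsLexSegmentSet {w | ∃ m w₀, mdeg m = k ∧ w₀ ∈ LSeg u v d ∧ w = m + w₀} (d + k)

/-- The set of products of `N` monomials from `B`; for `B` a set of monomials of a fixed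
degree `d` this is the minimal monomial generating set of `I^N`, `I = (B)`. -/
def prodSet {n : ℕ} (B : Set (Mon n)) (N : ℕ) : Set (Mon n) :=
  {m | ∃ f : Fin N → Mon n, (∀ i, f i ∈ B) ∧ m = ∑ i, f i}

/-- The equigenerated monomial ideal with (minimal) monomial generating set `G` has linear
quotients with respect to the order given by `prec` (`prec a b` = "`a` is listed before
`b`"): for generators `u_j` before `u_i` there are a generator `u_k` before `u_i` and a
variable `x_q` with `u_k / gcd(u_k,u_i) = x_q` and `x_q ∣ u_j / gcd(u_j,u_i)`. -/
def LinQuotOrder {n : ℕ} (G : Set (Mon n)) (prec : Mon n → Mon n → Prop) : Prop :=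
  ∀ uj ∈ G, ∀ ui ∈ G, prec uj ui →
    ∃ uk ∈ G, prec uk ui ∧ ∃ q : Fin n,
      (∀ p : Fin n, p ≠ q → uk p ≤ ui p) ∧ uk q = ui q + 1 ∧ ui q < uj q

/-- The equigenerated monomial ideal with minimal monomial generating set `G` has linear
quotients (with respect to some linear order of the generators). -/
def HasLinQuot {n : ℕ} (G : Set (Mon n)) : Prop :=
  ∃ prec : Mon n → Mon n → Prop,
    (∀ a ∈ G, ¬ prec a a) ∧
    (∀ a ∈ G, ∀ b ∈ G, ∀ c ∈ G, prec a b → prec b c → prec a c) ∧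
    (∀ a ∈ G, ∀ b ∈ G, a ≠ b → prec a b ∨ prec b a) ∧
    LinQuotOrder G prec

/-! ### Degrees -/

/-- The degree of `w` in the variables `x_1,…,x_l` (indices `< l`). -/
def headDeg {n : ℕ} (l : ℕ) (w : Mon n) : ℕ :=
  ∑ i ∈ Finset.univ.filter (fun i : Fin n => (i : ℕ) < l), w i

lemma mdeg_sum {n N : ℕ} (f : Fin N → Mon n) : mdeg (∑ i, f i) = ∑ i, mdeg (f i) := by
  simp only [mdeg, Finsupp.finsetSum_apply]
  exact Finset.sum_comm

lemma headDeg_sum {n N : ℕ} (l : ℕ) (f : Fin N → Mon n) :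
    headDeg l (∑ i, f i) = ∑ i, headDeg l (f i) := by
  simp only [headDeg, Finsupp.finsetSum_apply]
  exact Finset.sum_comm

lemma mdeg_eq_headDeg_add {n : ℕ} (l : ℕ) (w : Mon n) :
    mdeg w = headDeg l w +
      ∑ i ∈ Finset.univ.filter (fun i : Fin n => ¬ (i : ℕ) < l), w i :=
  (Finset.sum_filter_add_sum_filter_not _ _ _).symm

/-! ### Exchanging one variable -/

/-- `swapVar w p q` is the monomial `x_q · w / x_p`; it is meaningful when `x_p ∣ w`. -/
noncomputable def swapVar {n : ℕ} (w : Mon n) (p q : Fin n) : Mon n :=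
  w - Finsupp.single p 1 + Finsupp.single q 1

lemma swapVar_add {n : ℕ} {w : Mon n} {p q : Fin n} (hp : 0 < w p) :
    swapVar w p q + Finsupp.single p 1 = w + Finsupp.single q 1 := by
  have : Finsupp.single p 1 ≤ w := by
    rw [Finsupp.single_le_iff]; exact hp
  rw [swapVar, add_right_comm, tsub_add_cancel_of_le this]

/-- The pointwise effect of an exchange of `x_p` for `x_q`, for any `w'` with
`x_p w' = x_q w`. -/
lemma exchange_apply {n : ℕ} {w w' : Mon n} {p q : Fin n} (hpq : p < q)
    (h : w' + Finsupp.single p 1 = w + Finsupp.single q 1) :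
    w' p + 1 = w p ∧ w' q = w q + 1 ∧ ∀ t, t ≠ p → t ≠ q → w' t = w t := by
  have hx : ∀ t, w' t + (Finsupp.single p 1 : Mon n) t = w t + (Finsupp.single q 1 : Mon n) t :=
    fun t => DFunLike.congr_fun h t
  refine ⟨?_, ?_, fun t hp hq => ?_⟩
  · simpa [Finsupp.single_apply, hpq.ne, hpq.ne'] using hx p
  · simpa [Finsupp.single_apply, hpq.ne, hpq.ne'] using hx q
  · simpa [Finsupp.single_apply, hp.symm, hq.symm] using hx t

lemma mdeg_swapVar {n : ℕ} {w : Mon n} {p q : Fin n} (hp : 0 < w p) :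
    mdeg (swapVar w p q) = mdeg w := by
  have h := congrArg mdeg (swapVar_add (q := q) hp)
  simpa [mdeg, Finset.sum_add_distrib, Finsupp.single_apply] using h

/-! ### The lexsegment -/

lemma LexLT.trans_le {n : ℕ} {a b c : Mon n} (h₁ : LexLT a b) (h₂ : LexLE b c) : LexLE a c := by
  rcases h₂ with rfl | ⟨j, hj, hj'⟩
  · exact Or.inr h₁
  obtain ⟨i, hi, hi'⟩ := h₁
  right
  rcases lt_trichotomy i j with hij | rfl | hij
  · exact ⟨i, fun t ht => (hi t ht).trans (hj t (ht.trans hij)), by rw [← hj i hij]; exact hi'⟩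
  · exact ⟨i, fun t ht => (hi t ht).trans (hj t ht), hi'.trans hj'⟩
  · exact ⟨j, fun t ht => (hi t (ht.trans hij)).trans (hj t ht), by rw [hi j hij]; exact hj'⟩

/-- Membership in the lexsegment without reference to `v`: the degree-`d` monomials `w` are
either `x_1` times a monomial in `x_{l+1},…,x_n` with `w ≤_lex u`, or are free of `x_1` and
divisible by one of `x_2,…,x_l`. -/
lemma mem_LSeg_iff {n : ℕ} (l d : ℕ) (hn0 : 0 < n) (hln' : l - 1 < n) (hnn : n - 1 < n)
    (hl : 2 ≤ l) (hln : l ≤ n - 1) (hd : 2 ≤ d) (u v : Mon n)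
    (hu1 : u ⟨0, hn0⟩ = 1)
    (humid : ∀ i : Fin n, 1 ≤ (i : ℕ) → (i : ℕ) < l → u i = 0)
    (hv : v = Finsupp.single (⟨l - 1, hln'⟩ : Fin n) 1 +
      Finsupp.single (⟨n - 1, hnn⟩ : Fin n) (d - 1)) (w : Mon n) :
    w ∈ LSeg u v d ↔ mdeg w = d ∧
      ((w ⟨0, hn0⟩ = 1 ∧ (∀ i : Fin n, 1 ≤ (i : ℕ) → (i : ℕ) < l → w i = 0) ∧ LexLE w u) ∨
       (w ⟨0, hn0⟩ = 0 ∧ ∃ i : Fin n, 1 ≤ (i : ℕ) ∧ (i : ℕ) < l ∧ 0 < w i)) := by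
  have hv_app : ∀ i : Fin n, v i = (if (i : ℕ) = l - 1 then 1 else 0) +
      (if (i : ℕ) = n - 1 then d - 1 else 0) := by
    intro i
    subst hv
    simp only [Finsupp.add_apply, Finsupp.single_apply, Fin.ext_iff]
    simp only [eq_comm]
  have hvd : mdeg v = d := by
    subst hv
    simp only [mdeg, Finsupp.add_apply, Finsupp.single_apply, Finset.sum_add_distrib,
      Finset.sum_ite_eq, Finset.mem_univ, if_true]
    omega
  have hv0 : v ⟨0, hn0⟩ = 0 := by
    rw [hv_app, if_neg (by simp; omega), if_neg (by simp; omega)]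
  have hvl : v ⟨l - 1, hln'⟩ = 1 := by
    rw [hv_app, if_pos rfl, if_neg (by simp; omega)]
  have hlt0 : ∀ (j : Fin n), j < (⟨0, hn0⟩ : Fin n) → False := by
    intro j hj; simp [Fin.lt_def] at hj
  constructor
  · rintro ⟨hdeg, hwu, hvw⟩
    refine ⟨hdeg, ?_⟩
    by_cases h0 : w ⟨0, hn0⟩ = 0
    · refine Or.inr ⟨h0, ?_⟩
      rcases hvw with rfl | ⟨i, hi, hi'⟩
      · exact ⟨⟨l - 1, hln'⟩, by simp; omega, by simp; omega, by omega⟩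
      · by_cases hil : (i : ℕ) < l
        · refine ⟨i, ?_, hil, by omega⟩
          by_contra hc
          have : i = ⟨0, hn0⟩ := by ext; simp; omega
          subst this
          omega
        · refine ⟨⟨l - 1, hln'⟩, by simp; omega, by simp; omega, ?_⟩
          rw [← hi _ (by rw [Fin.lt_def]; simp; omega)]
          omega
    · left
      rcases hwu with rfl | ⟨j, hj, hj'⟩
      · exact ⟨hu1, humid, Or.inl rfl⟩
      · have hj0 : j ≠ ⟨0, hn0⟩ := by
          rintro rfl
          omega
        have hjpos : 1 ≤ (j : ℕ) := by
          by_contra hc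
          exact hj0 (by ext; simp; omega)
        have hjl : l ≤ (j : ℕ) := by
          by_contra hc
          have := humid j hjpos (by omega)
          omega
        refine ⟨by rw [hj _ (by rw [Fin.lt_def]; exact hjpos)]; exact hu1, fun i h1 h2 => ?_,
          Or.inr ⟨j, hj, hj'⟩⟩
        rw [hj i (by rw [Fin.lt_def]; omega)]
        exact humid i h1 h2
  · rintro ⟨hdeg, ⟨h0, -, hwu⟩ | ⟨h0, k, hk1, hkl, hk⟩⟩
    · exact ⟨hdeg, hwu, Or.inr ⟨⟨0, hn0⟩, fun j hj => (hlt0 j hj).elim, by omega⟩⟩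
    · refine ⟨hdeg, Or.inr ⟨⟨0, hn0⟩, fun j hj => (hlt0 j hj).elim, by omega⟩, ?_⟩
      by_cases hne : v = w
      · exact Or.inl hne
      have hex : ∃ i, v i ≠ w i := by
        by_contra! hc
        exact hne (Finsupp.ext hc)
      obtain ⟨i, hi, hmin⟩ := WellFounded.has_min (wellFounded_lt (α := Fin n))
        {i | v i ≠ w i} hex
      have hbelow : ∀ j, j < i → v j = w j := fun j hj => by
        by_contra hc
        exact hmin j hc hj
      refine Or.inr ⟨i, hbelow, lt_of_le_of_ne ?_ hi⟩
      -- A smaller exponent of `w` at the first difference `i` forces `x_i ∣ v`, hence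
      -- `i = l` (so `w` misses all of `x_2,…,x_l`) or `i = n` (so `deg w < deg v`).
      by_contra! hlt
      have hvi := hv_app i
      by_cases hil : (i : ℕ) = l - 1
      · rw [if_pos hil, if_neg (by omega)] at hvi
        rcases eq_or_ne k i with rfl | hki
        · omega
        have hki' : k < i := by
          have : (k : ℕ) ≠ i := fun h => hki (Fin.ext h)
          rw [Fin.lt_def]; omega
        have := hbelow k hki'
        have hvk := hv_app k
        rw [if_neg (by rw [Fin.lt_def] at hki'; omega), if_neg (by omega)] at hvk
        omega
      · by_cases hin : (i : ℕ) = n - 1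
        · have : mdeg w < mdeg v := by
            refine Finset.sum_lt_sum (fun j _ => ?_) ⟨i, Finset.mem_univ _, hlt⟩
            rcases lt_or_ge j i with hj | hj
            · exact (hbelow j hj).ge
            · have : j = i := by
                rw [Fin.le_def] at hj
                ext; omega
              subst this
              exact hlt.le
          omega
        · rw [if_neg hil, if_neg hin] at hvi
          omega

/-! ### Exchange in products -/

/-- One factor of a product of `N` monomials may be exchanged inside `B`; when `p < q` and
`w_q < m_q` this yields the witness `x_q w / x_p` that linear quotients ask for. -/
lemma exchange_witness {n N : ℕ} {B : Set (Mon n)} {f : Fin N → Mon n} (hf : ∀ i, f i ∈ B)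
    {m : Mon n} (i : Fin N) {p q : Fin n} (hpq : p < q) (hp : 0 < f i p)
    (hB : swapVar (f i) p q ∈ B) (hq : (∑ i, f i) q < m q) :
    ∃ uk ∈ prodSet B N, RevLexGT (∑ i, f i) uk ∧ ∃ q : Fin n,
      (∀ p : Fin n, p ≠ q → uk p ≤ (∑ i, f i) p) ∧ uk q = (∑ i, f i) q + 1 ∧
        (∑ i, f i) q < m q := by
  set g := Function.update f i (swapVar (f i) p q) with hg
  have hsum : ∑ j, g j + Finsupp.single p 1 = ∑ j, f j + Finsupp.single q 1 := by
    rw [hg, Finset.sum_update_of_mem (Finset.mem_univ i),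
      ← Finset.add_sum_erase _ f (Finset.mem_univ i), Finset.erase_eq, add_right_comm,
      swapVar_add hp, add_right_comm]
  obtain ⟨h1, h2, h3⟩ := exchange_apply hpq hsum
  refine ⟨∑ j, g j, ⟨g, fun j => ?_, rfl⟩, ⟨q, fun t ht => ?_, by omega⟩, q, fun t ht => ?_, h2, hq⟩
  · by_cases hj : j = i
    · subst hj; simpa [hg] using hB
    · simpa [hg, hj] using hf j
  · exact (h3 t (hpq.trans ht).ne' ht.ne').symm
  · rcases eq_or_ne t p with rfl | htp
    · omega
    · exact (h3 t htp ht).le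

/-- A variable dividing a product divides one of its factors. -/
lemma exists_factor_pos {n N : ℕ} {f : Fin N → Mon n} {p : Fin n} (h : 0 < (∑ i, f i) p) :
    ∃ i, 0 < f i p := by
  by_contra! hc
  rw [Finsupp.finsetSum_apply, Finset.sum_eq_zero fun i _ => by have := hc i; omega] at h
  exact h.false

/-! ### Linear quotients -/

/-- for `2 ≤ l ≤ n-1`, `u = x_1 x_{l+1}^{a_{l+1}}⋯x_n^{a_n}` and
`v = x_l x_n^{d-1}` of degree `d` with `u ≥_lex v`, every power `I^N`, `N ≥ 1`, of the
lexsegment ideal `I = (L(u,v))` has linear quotients with respect to the increasing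
reverse lexicographic order of its minimal monomial generators (`a` is listed before `b`
iff `a <_revlex b`, i.e. `b >_revlex a`). -/
theorem stmt13 {n : ℕ} (l d : ℕ)
    (hl : 2 ≤ l) (hln : l ≤ n - 1) (hd : 2 ≤ d)
    (u v : Mon n) (hud : mdeg u = d)
    (hu1 : u ⟨0, by omega⟩ = 1)
    (humid : ∀ i : Fin n, 1 ≤ (i : ℕ) → (i : ℕ) < l → u i = 0)
    (hv : v = Finsupp.single (⟨l - 1, by omega⟩ : Fin n) 1 +
      Finsupp.single (⟨n - 1, by omega⟩ : Fin n) (d - 1))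
    (huv : LexLE v u) :
    ∀ N : ℕ, 1 ≤ N →
      LinQuotOrder (prodSet (LSeg u v d) N) (fun a b => RevLexGT b a) := by
  rintro N - m ⟨g, hgB, rfl⟩ w ⟨f, hf, rfl⟩ ⟨s, hs, hlt⟩
  have hn0 : 0 < n := by omega
  have hmem := mem_LSeg_iff l d hn0 (by omega) (by omega) hl hln hd u v hu1 humid hv
  have hdeg_eq : mdeg (∑ i, f i) = mdeg (∑ i, g i) := by
    rw [mdeg_sum, mdeg_sum]
    exact Finset.sum_congr rfl fun i _ => (hf i).1.trans (hgB i).1.symm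
  have hzero : ∀ i : Fin n, ¬ 1 ≤ (i : ℕ) → i = ⟨0, hn0⟩ := by
    intro i hi; ext; simp; omega
  by_cases hsl : (s : ℕ) < l
  · obtain ⟨p, hps, hp⟩ : ∃ p, p < s ∧ (∑ i, g i) p < (∑ i, f i) p := by
      by_contra! hc
      refine hdeg_eq.not_lt (Finset.sum_lt_sum (fun j _ => ?_) ⟨s, Finset.mem_univ _, hlt⟩)
      rcases lt_trichotomy j s with h | rfl | h
      · exact hc j h
      · exact hlt.le
      · exact (hs j h).le
    obtain ⟨i, hi⟩ := exists_factor_pos (p := p) ((Nat.zero_le _).trans_lt hp)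
    refine exchange_witness hf i hps hi ((hmem _).2 ⟨(mdeg_swapVar hi).trans (hf i).1, Or.inr ?_⟩) hlt
    obtain ⟨h1, h2, h3⟩ := exchange_apply hps (swapVar_add (q := s) hi)
    rw [Fin.lt_def] at hps
    refine ⟨?_, s, by omega, hsl, by omega⟩
    rcases ((hmem _).1 (hf i)).2 with ⟨h0, hmid, -⟩ | ⟨h0, -⟩
    -- A factor divisible by `x_1` contains none of `x_2,…,x_l`, so `x_p` is `x_1`.
    · have hp0 : p = ⟨0, hn0⟩ := by
        refine hzero p fun hp1 => ?_
        have := hmid p hp1 (by omega)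
        omega
      subst hp0
      omega
    · have hp0 : (⟨0, hn0⟩ : Fin n) ≠ p := by
        rintro rfl
        omega
      rw [h3 _ hp0 (by simp [Fin.ext_iff]; omega)]
      exact h0
  · by_cases hmid : ∃ p : Fin n, l ≤ (p : ℕ) ∧ p < s ∧ 0 < (∑ i, f i) p
    · obtain ⟨p, hpl, hps, hp⟩ := hmid
      obtain ⟨i, hi⟩ := exists_factor_pos hp
      refine exchange_witness hf i hps hi ((hmem _).2 ⟨(mdeg_swapVar hi).trans (hf i).1, ?_⟩) hlt
      obtain ⟨h1, h2, h3⟩ := exchange_apply hps (swapVar_add (q := s) hi)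
      have hsame : ∀ j : Fin n, (j : ℕ) < l → swapVar (f i) p s j = f i j := fun j hj =>
        h3 j (by rintro rfl; omega) (by rintro rfl; omega)
      rcases ((hmem _).1 (hf i)).2 with ⟨h0, hz, hle⟩ | ⟨h0, k, hk1, hkl, hk⟩
      · refine Or.inl ⟨(hsame _ (by simp; omega)).trans h0,
          fun j hj1 hjl => (hsame j hjl).trans (hz j hj1 hjl), LexLT.trans_le ?_ hle⟩
        exact ⟨p, fun j hj => h3 j hj.ne (hj.trans hps).ne, by omega⟩
      · exact Or.inr ⟨(hsame _ (by simp; omega)).trans h0, k, hk1, hkl, by rwa [hsame k hkl]⟩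
    · -- Now `w` involves none of `x_{l+1},…,x_{s-1}`, so `w` has smaller degree than `m` in
      -- `x_{l+1},…,x_n`, hence head degree exceeding that of `m`, which is at least `N`.
      push Not at hmid
      have hhead : N ≤ headDeg l (∑ i, g i) := by
        rw [headDeg_sum]
        have : ∑ _i : Fin N, 1 ≤ ∑ i, headDeg l (g i) := by
          refine Finset.sum_le_sum fun i _ => ?_
          have hpos : ∃ k : Fin n, (k : ℕ) < l ∧ 0 < g i k := by
            rcases ((hmem _).1 (hgB i)).2 with ⟨h0, -⟩ | ⟨-, k, -, hkl, hk⟩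
            · exact ⟨⟨0, hn0⟩, by simp; omega, by omega⟩
            · exact ⟨k, hkl, hk⟩
          obtain ⟨k, hkl, hk⟩ := hpos
          exact hk.trans_le (Finset.single_le_sum (f := fun j => g i j) (fun _ _ => Nat.zero_le _)
            (by simpa using hkl))
        simpa using this
      have htail : ∑ j ∈ Finset.univ.filter (fun j : Fin n => ¬ (j : ℕ) < l), (∑ i, f i) j <
          ∑ j ∈ Finset.univ.filter (fun j : Fin n => ¬ (j : ℕ) < l), (∑ i, g i) j := by
        refine Finset.sum_lt_sum (fun j hj => ?_) ⟨s, by simpa using hsl, hlt⟩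
        rw [Finset.mem_filter] at hj
        rcases lt_trichotomy j s with h | rfl | h
        · exact (hmid j (by omega) h).trans (Nat.zero_le _)
        · exact hlt.le
        · exact (hs j h).le
      rw [mdeg_eq_headDeg_add l, mdeg_eq_headDeg_add l] at hdeg_eq
      obtain ⟨i, hi2⟩ : ∃ i, 2 ≤ headDeg l (f i) := by
        by_contra! hc
        have : ∑ i, headDeg l (f i) ≤ ∑ _i : Fin N, 1 :=
          Finset.sum_le_sum fun i _ => by have := hc i; omega
        rw [← headDeg_sum] at this
        simp only [Finset.sum_const, Finset.card_univ, Fintype.card_fin, smul_eq_mul, mul_one]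
          at this
        omega
      rcases ((hmem _).1 (hf i)).2 with ⟨h0, hz, -⟩ | ⟨h0, p, hp1, hpl, hp⟩
      · have : headDeg l (f i) = f i ⟨0, hn0⟩ := by
          refine Finset.sum_eq_single_of_mem _ (by simp; omega) fun j hj hj0 => ?_
          rw [Finset.mem_filter] at hj
          exact hz j (by by_contra hc; exact hj0 (hzero j hc)) hj.2
        omega
      · have hps : p < s := by rw [Fin.lt_def]; omega
        refine exchange_witness hf i hps hp
          ((hmem _).2 ⟨(mdeg_swapVar hp).trans (hf i).1, Or.inr ?_⟩) hlt
        obtain ⟨h1, h2, h3⟩ := exchange_apply hps (swapVar_add (q := s) hp)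
        have hw0 : swapVar (f i) p s ⟨0, hn0⟩ = 0 := by
          rw [h3 _ (by rintro rfl; simp at hp1) (by rintro rfl; simp at hsl; omega)]
          exact h0
        refine ⟨hw0, ?_⟩
        -- The exchange lowers the head degree by exactly one, so it stays positive.
        by_contra! hc
        have hle : headDeg l (f i) ≤ ∑ j ∈ Finset.univ.filter (fun j : Fin n => (j : ℕ) < l),
              if j = p then 1 else 0 := by
          refine Finset.sum_le_sum fun j hj => ?_
          rw [Finset.mem_filter] at hj
          have hj0 : swapVar (f i) p s j = 0 := by
            by_cases hj1 : 1 ≤ (j : ℕ)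
            · have := hc j hj1 hj.2
              omega
            · rw [hzero j hj1]; exact hw0
          split_ifs with hjp
          · subst hjp; omega
          · rw [← h3 j hjp (by rintro rfl; omega), hj0]
        rw [Finset.sum_ite_eq' ] at hle
        split_ifs at hle <;> omega
end

section
/- Let 2 ≤ l ≤ n−1, let u = x_1 x_{l+1}^{a_{l+1}}⋯x_n^{a_n} and v = x_l x_n^{d−1} be monomials of degree d with u ≥_lex v, and let I = (L(u,v)) be the corresponding lexsegment ideal (a lexsegment ideal with linear resolution which is not a completely lexsegment ideal). Then the toric ideal P = ker φ of the Rees algebra of I has a quadratic Gröbner basis: with respect to the product order <_σ^# on 𝒯 (where <^# is the lexicographic order on R = K[{T_w}_{w∈L(u,v)}] induced by T_{w_1} > T_{w_2} whenever w_1 >_lex w_2, and <_σ is the decreasing revlexicographic order on S), P has a Gröbner basis consisting of binomials that are either of the form T_w T_{w'} − T_{w''} T_{w'''} (quadratic in the T-variables) or of the form x_i T_w − x_j T_{w'}; in particular every element of this Gröbner basis has total degree 2. -/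
/-- A monomial order on a polynomial ring with variables indexed by `α`, given as a strict
total order on exponent vectors which is compatible with multiplication of monomials and
for which `1` is the smallest monomial. -/
structure MonOrd (α : Type*) where
  lt : (α →₀ ℕ) → (α →₀ ℕ) → Prop
  irrefl : ∀ a, ¬ lt a a
  trans : ∀ a b c, lt a b → lt b c → lt a c
  total : ∀ a b, a ≠ b → lt a b ∨ lt b a
  add_right : ∀ a b c, lt a b → lt (a + c) (b + c)
  zero_lt : ∀ a, a ≠ 0 → lt 0 a

/-- The map `π : R = K[{T_u}_{u ∈ B}] → S`, `T_u ↦ u`. -/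
noncomputable def piB {n : ℕ} (K : Type*) [Field K] (B : Set (Mon n)) :
    MvPolynomial ↥B K →ₐ[K] MvPolynomial (Fin n) K :=
  MvPolynomial.aeval (fun u : ↥B => MvPolynomial.monomial (u : Mon n) (1 : K))

/-- The toric ideal `J = ker π` of `K[B]`. -/
noncomputable def toricJ {n : ℕ} (K : Type*) [Field K] (B : Set (Mon n)) :
    Ideal (MvPolynomial ↥B K) :=
  RingHom.ker (piB K B).toRingHom

/-- `m` is the leading monomial of `f ≠ 0` with respect to the order `lt` on exponent
vectors. -/
def IsLeadMon {α K : Type*} [CommSemiring K] (lt : (α →₀ ℕ) → (α →₀ ℕ) → Prop)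
    (f : MvPolynomial α K) (m : α →₀ ℕ) : Prop :=
  m ∈ f.support ∧ ∀ m' ∈ f.support, m' ≠ m → lt m' m

/-- `m` is a standard monomial of the ideal `J` with respect to the order `lt`: it is not
the leading monomial of any nonzero element of `J`. -/
def IsStdMon {α K : Type*} [CommSemiring K] (lt : (α →₀ ℕ) → (α →₀ ℕ) → Prop)
    (J : Ideal (MvPolynomial α K)) (m : α →₀ ℕ) : Prop :=
  ∀ f ∈ J, f ≠ 0 → ¬ IsLeadMon lt f m

/-- The image in `S` of a monomial `T_{u_1} ⋯ T_{u_N}` of `R`, i.e. the product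
`u_1 ⋯ u_N`. -/
noncomputable def expandB {n : ℕ} {B : Set (Mon n)} (e : ↥B →₀ ℕ) : Mon n :=
  e.sum fun u k => k • (u : Mon n)

/-- The number `N` of factors of a monomial `T_{u_1} ⋯ T_{u_N}` of `R`. -/
def edeg {n : ℕ} {B : Set (Mon n)} (e : ↥B →₀ ℕ) : ℕ := e.sum fun _ k => k

/-- `B` satisfies the σ-exchange property (with respect to the order `ltσ` on the monomials
of `S` and the order `ltR` on the monomials of `R = K[{T_u}_{u∈B}]`): whenever
`T_{u_1}⋯T_{u_N}` and `T_{v_1}⋯T_{v_N}` are standard monomials of `J` with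
`u_1⋯u_N <_σ v_1⋯v_N`, there are a factor `u_δ`, a `q ∈ supp(v_1⋯v_N)` and a
`j ∈ supp(u_δ)` with `ν_q(u_1⋯u_N) < ν_q(v_1⋯v_N)`, `x_j <_σ x_q` and
`x_q u_δ / x_j ∈ B`. -/
def SigmaExchange {n : ℕ} (K : Type*) [Field K] (B : Set (Mon n))
    (ltσ : Mon n → Mon n → Prop)
    (ltR : (↥B →₀ ℕ) → (↥B →₀ ℕ) → Prop) : Prop :=
  ∀ e e' : ↥B →₀ ℕ, edeg e = edeg e' →
    IsStdMon ltR (toricJ K B) e → IsStdMon ltR (toricJ K B) e' →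
    ltσ (expandB e) (expandB e') →
    ∃ uδ : ↥B, 0 < e uδ ∧ ∃ q j : Fin n,
      expandB e q < expandB e' q ∧
      0 < (uδ : Mon n) j ∧
      ltσ (Finsupp.single j 1) (Finsupp.single q 1) ∧
      ((uδ : Mon n) + Finsupp.single q 1 - Finsupp.single j 1) ∈ B

/-- The map `φ : 𝒯 = K[x_1,…,x_n,{T_u}_{u∈B}] → S[t]`, `x_i ↦ x_i`, `T_u ↦ u·t`; its image
is the Rees algebra of `I = (B)`. -/
noncomputable def reesPhi {n : ℕ} (K : Type*) [Field K] (B : Set (Mon n)) :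
    MvPolynomial (Fin n ⊕ ↥B) K →ₐ[K] Polynomial (MvPolynomial (Fin n) K) :=
  MvPolynomial.aeval (Sum.elim
    (fun i : Fin n => Polynomial.C (MvPolynomial.X i))
    (fun u : ↥B => Polynomial.C (MvPolynomial.monomial (u : Mon n) (1 : K)) * Polynomial.X))

/-- The toric ideal `P = ker φ` of the Rees algebra of `I = (B)`. -/
noncomputable def reesP {n : ℕ} (K : Type*) [Field K] (B : Set (Mon n)) :
    Ideal (MvPolynomial (Fin n ⊕ ↥B) K) :=
  RingHom.ker (reesPhi K B).toRingHom

/-- `f ∈ 𝒯` only involves the variables `T_u`, i.e. `f ∈ K[{T_u}_{u∈B}]`. -/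
def OnlyT {n : ℕ} {K : Type*} [Field K] {B : Set (Mon n)}
    (f : MvPolynomial (Fin n ⊕ ↥B) K) : Prop :=
  ∀ m ∈ f.support, ∀ i : Fin n, m (Sum.inl i) = 0

/-- `f ∈ 𝒯` is homogeneous of degree `1` in the variables `T_u`. -/
def TDegOne {n : ℕ} {K : Type*} [Field K] {B : Set (Mon n)}
    (f : MvPolynomial (Fin n ⊕ ↥B) K) : Prop :=
  ∀ m ∈ f.support, (∑ s ∈ m.support, if s.isRight then m s else 0) = 1

/-- The monomial ideal `I = (B)` is of fiber type: the toric ideal `P` of its Rees algebra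
is generated by `P ∩ K[{T_u}_{u∈B}]` together with the elements of `P` homogeneous of
degree `1` in the variables `T_u`. -/
def IsFiberType {n : ℕ} (K : Type*) [Field K] (B : Set (Mon n)) : Prop :=
  reesP K B =
    Ideal.span ({f | f ∈ reesP K B ∧ OnlyT f} ∪ {f | f ∈ reesP K B ∧ TDegOne f})

/-- The `S`-part of a monomial of `𝒯`. -/
noncomputable def sPart {n : ℕ} {B : Set (Mon n)} (m : (Fin n ⊕ ↥B) →₀ ℕ) : Mon n :=
  (Finsupp.sumFinsuppEquivProdFinsupp m).1

/-- The `T`-part of a monomial of `𝒯`. -/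
noncomputable def tPart {n : ℕ} {B : Set (Mon n)} (m : (Fin n ⊕ ↥B) →₀ ℕ) : ↥B →₀ ℕ :=
  (Finsupp.sumFinsuppEquivProdFinsupp m).2

/-- The product order `<_σ^#` on the monomials of `𝒯 = K[x_1,…,x_n,{T_u}_{u∈B}]`. -/
def ProdLT {n : ℕ} {B : Set (Mon n)} (ltσ : Mon n → Mon n → Prop)
    (ltR : (↥B →₀ ℕ) → (↥B →₀ ℕ) → Prop)
    (m m' : (Fin n ⊕ ↥B) →₀ ℕ) : Prop :=
  ltσ (sPart m) (sPart m') ∨ (sPart m = sPart m' ∧ ltR (tPart m) (tPart m'))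

/-- `G` is a Gröbner basis of the ideal `P` with respect to the order `lt`: the leading
monomial of every nonzero `f ∈ P` is divisible by the leading monomial of some element
of `G`. -/
def IsGB {α K : Type*} [CommSemiring K] (lt : (α →₀ ℕ) → (α →₀ ℕ) → Prop)
    (P : Ideal (MvPolynomial α K)) (G : Set (MvPolynomial α K)) : Prop :=
  ∀ f ∈ P, f ≠ 0 → ∃ g ∈ G, g ≠ 0 ∧
    ∃ mg mf, IsLeadMon lt g mg ∧ IsLeadMon lt f mf ∧ mg ≤ mf
/-- The lexicographic order `<^#` on the monomials of `R = K[{T_w}_{w∈B}]` induced by the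
order of the variables given by `T_{w_1} > T_{w_2}` iff `w_1 >_lex w_2`:
`e <^# e'` iff at the largest variable where they differ, `e'` has the larger exponent. -/
def SharpLT {n : ℕ} {B : Set (Mon n)} (e e' : ↥B →₀ ℕ) : Prop :=
  ∃ w : ↥B, e w < e' w ∧ ∀ w' : ↥B, LexLT (w : Mon n) (w' : Mon n) → e w' = e' w'

/-! ### Dominance of suffix degrees -/

/-- Suffix degree: the degree of `m` in the variables of index at least `q`. -/
def sufDeg {n : ℕ} (q : ℕ) (m : Fin n → ℕ) : ℕ := ∑ j : Fin n, if q ≤ (j : ℕ) then m j else 0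

theorem sufDeg_zero {n : ℕ} (m : Fin n → ℕ) : sufDeg 0 m = ∑ j, m j := by
  simp [sufDeg]

theorem sufDeg_succ {n : ℕ} (i : Fin n) (m : Fin n → ℕ) :
    sufDeg (i : ℕ) m = m i + sufDeg ((i : ℕ) + 1) m := by
  have h : m i = ∑ j : Fin n, if j = i then m j else 0 := by simp
  rw [sufDeg, sufDeg, h, ← Finset.sum_add_distrib]
  refine Finset.sum_congr rfl fun j _ => ?_
  by_cases hj : j = i
  · subst hj; simp
  · have : (j : ℕ) ≠ i := fun h => hj (Fin.ext h)
    simp only [hj, if_false, zero_add]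
    congr 1
    apply propext
    omega

theorem sufDeg_anti {n : ℕ} {p q : ℕ} (h : p ≤ q) (m : Fin n → ℕ) : sufDeg q m ≤ sufDeg p m := by
  refine Finset.sum_le_sum fun j _ => ?_
  split_ifs <;> omega

/-- If the variables of index in `[p, q)` do not occur in `m`, the two suffix degrees agree. -/
theorem sufDeg_congr {n : ℕ} {p q : ℕ} (h : p ≤ q) (m : Fin n → ℕ)
    (hm : ∀ j : Fin n, p ≤ (j : ℕ) → (j : ℕ) < q → m j = 0) : sufDeg q m = sufDeg p m := by
  refine Finset.sum_congr rfl fun j _ => ?_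
  have := hm j
  split_ifs <;> omega

theorem sufDeg_eq_zero {n : ℕ} {q : ℕ} (m : Fin n → ℕ)
    (hm : ∀ j : Fin n, q ≤ (j : ℕ) → m j = 0) : sufDeg q m = 0 := by
  refine Finset.sum_eq_zero fun j _ => ?_
  have := hm j
  split_ifs <;> omega

/-- Vectors of equal degree that agree below `i` have equal suffix degrees from `i` on. -/
theorem sufDeg_eq_of_agree {n : ℕ} {m m' : Fin n → ℕ} (hd : ∑ j, m j = ∑ j, m' j) {i : ℕ}
    (h : ∀ j : Fin n, (j : ℕ) < i → m j = m' j) (hi : i ≤ n) : sufDeg i m = sufDeg i m' := by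
  induction i with
  | zero => simpa [sufDeg_zero] using hd
  | succ k ih =>
    have h1 := ih (fun j hj => h j (by omega)) (by omega)
    have h2 := sufDeg_succ (⟨k, by omega⟩ : Fin n) m
    have h3 := sufDeg_succ (⟨k, by omega⟩ : Fin n) m'
    have h4 := h ⟨k, by omega⟩ (by simp)
    simp only at h2 h3
    omega

/-- The maximum of a family of monomials whose pairs cannot be improved is as small as
possible: `s` and `t` index two families of degree `d` monomials of equal size and equal
product, `hQ` says that `W x₀` is a lexicographic maximum of the first family and that a member
first differing from it has there an exponent smaller by one, `hQ2` that in the first family no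
swap of two later variables improves a pair. Then not all members of the second family lie strictly
below `W x₀`. The proof passes, variable by variable, to the members that agree with `W x₀`
so far; the first family keeps the larger suffix degrees, so the second one never becomes empty. -/
theorem no_smaller_family {n : ℕ} {ι : Type*} (W : ι → Fin n → ℕ) (d : ℕ) (s t : Finset ι)
    (hs : ∀ x ∈ s, ∑ j, W x j = d) (ht : ∀ x ∈ t, ∑ j, W x j = d)
    (hcard : s.card = t.card) (hsum : ∀ j, ∑ x ∈ s, W x j = ∑ x ∈ t, W x j)
    (x₀ : ι) (hx₀ : x₀ ∈ s)
    (hmax : ∀ y ∈ t, ∃ i, (∀ j, j < i → W y j = W x₀ j) ∧ W y i < W x₀ i)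
    (hQ : ∀ x ∈ s, ∀ i, (∀ j, j < i → W x j = W x₀ j) →
      W x i ≤ W x₀ i ∧ W x₀ i ≤ W x i + 1)
    (hQ2 : ∀ x ∈ s, ∀ y ∈ s, ∀ i, (∀ j, j < i → W x j = W y j) → W x i < W y i →
      ∀ p q, i < p → i < q → 0 < W x p → 0 < W y q → p ≤ q) : False := by
  classical
  -- Invariant at level `i`: subfamilies of equal size agreeing with `W x₀` below `i`, the
  -- second of which has the smaller suffix degrees.
  have key : ∀ i : ℕ, i ≤ n → ∃ A Y : Finset ι, A ⊆ s ∧ Y ⊆ t ∧ A.card = Y.card ∧ x₀ ∈ A ∧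
      (∀ x ∈ A, ∀ j : Fin n, (j : ℕ) < i → W x j = W x₀ j) ∧
      (∀ x ∈ Y, ∀ j : Fin n, (j : ℕ) < i → W x j = W x₀ j) ∧
      ∀ q, i ≤ q → ∑ x ∈ Y, sufDeg q (W x) ≤ ∑ x ∈ A, sufDeg q (W x) := by
    intro i
    induction i with
    | zero =>
      intro _
      refine ⟨s, t, subset_rfl, subset_rfl, hcard, hx₀, by simp, by simp, fun q _ => ?_⟩
      simp only [sufDeg]
      rw [Finset.sum_comm, Finset.sum_comm (s := s)]
      refine le_of_eq (Finset.sum_congr rfl fun j _ => ?_)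
      split_ifs
      · exact (hsum j).symm
      · simp
    | succ k ih =>
      intro hk
      obtain ⟨A, Y, hAs, hYt, hc, hxA, hA, hY, hdom⟩ := ih (by omega)
      set i : Fin n := ⟨k, by omega⟩ with hi
      have hlt : ∀ j : Fin n, j < i ↔ (j : ℕ) < k := fun j => by simp [hi, Fin.lt_def]
      have hAi : ∀ x ∈ A, W x i ≤ W x₀ i ∧ W x₀ i ≤ W x i + 1 := fun x hx =>
        hQ x (hAs hx) i fun j hj => hA x hx j ((hlt j).1 hj)
      have hYi : ∀ y ∈ Y, W y i ≤ W x₀ i := by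
        intro y hy
        obtain ⟨r, hr1, hr2⟩ := hmax y (hYt hy)
        rcases lt_trichotomy r i with h | h | h
        · exact absurd (hY y hy r ((hlt r).1 h)) (by omega)
        · subst h; omega
        · exact (hr1 i h).le
      have hD0 : ∀ x ∈ A, sufDeg k (W x) = sufDeg k (W x₀) := fun x hx =>
        sufDeg_eq_of_agree ((hs x (hAs hx)).trans (hs x₀ hx₀).symm) (hA x hx) (by omega)
      have hD1 : ∀ x ∈ Y, sufDeg k (W x) = sufDeg k (W x₀) := fun x hx =>
        sufDeg_eq_of_agree ((ht x (hYt hx)).trans (hs x₀ hx₀).symm) (hY x hx) (by omega)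
      have hstep : ∀ x, sufDeg k (W x) = W x i + sufDeg (k + 1) (W x) := fun x =>
        sufDeg_succ i (W x)
      -- the second family has at least as large a total exponent of the variable `i`
      have hexp : ∑ x ∈ A, W x i ≤ ∑ x ∈ Y, W x i := by
        have h1 : ∑ x ∈ A, sufDeg k (W x) = A.card * sufDeg k (W x₀) := by
          rw [Finset.sum_congr rfl hD0]; simp
        have h2 : ∑ x ∈ Y, sufDeg k (W x) = Y.card * sufDeg k (W x₀) := by
          rw [Finset.sum_congr rfl hD1]; simp
        have h3 := hdom (k + 1) (by omega)
        simp only [hstep, Finset.sum_add_distrib] at h1 h2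
        rw [hc] at h1
        omega
      set A' := A.filter fun x => W x i = W x₀ i with hA'
      set Y' := Y.filter fun x => W x i = W x₀ i with hY'
      have hcards : A'.card ≤ Y'.card := by
        have h1 : A.card * W x₀ i = ∑ x ∈ A, W x i + (A.filter fun x => ¬ W x i = W x₀ i).card := by
          rw [Finset.card_filter, ← Finset.sum_add_distrib, ← smul_eq_mul, ← Finset.sum_const]
          refine Finset.sum_congr rfl fun x hx => ?_
          have := hAi x hx
          split_ifs <;> omega
        have h2 : ∑ x ∈ Y, W x i + (Y.filter fun x => ¬ W x i = W x₀ i).card ≤ Y.card * W x₀ i := by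
          rw [Finset.card_filter, ← Finset.sum_add_distrib, ← smul_eq_mul, ← Finset.sum_const]
          refine Finset.sum_le_sum fun x hx => ?_
          have := hYi x hx
          split_ifs <;> omega
        have h3 := Finset.card_filter_add_card_filter_not (s := A) (fun x => W x i = W x₀ i)
        have h4 := Finset.card_filter_add_card_filter_not (s := Y) (fun x => W x i = W x₀ i)
        rw [← hA', hc] at h3
        rw [← hY'] at h4
        rw [hc] at h1
        omega
      obtain ⟨Z, hZY, hZc⟩ := Finset.exists_subset_card_eq hcards
      have hagree : ∀ x, (∀ j : Fin n, (j : ℕ) < k → W x j = W x₀ j) → W x i = W x₀ i →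
          ∀ j : Fin n, (j : ℕ) < k + 1 → W x j = W x₀ j := by
        intro x h1 h2 j hj
        rcases Nat.lt_succ_iff_lt_or_eq.1 hj with h | h
        · exact h1 j h
        · have : j = i := Fin.ext h
          rw [this]; exact h2
      have hA'A : A' ⊆ A := Finset.filter_subset _ _
      have hZY0 : Z ⊆ Y := hZY.trans (Finset.filter_subset _ _)
      refine ⟨A', Z, hA'A.trans hAs, hZY0.trans hYt, hZc.symm,
        Finset.mem_filter.2 ⟨hxA, rfl⟩,
        fun x hx => hagree x (hA x (hA'A hx)) (Finset.mem_filter.1 hx).2,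
        fun x hx => hagree x (hY x (hZY0 hx)) (Finset.mem_filter.1 (hZY hx)).2, fun q hq => ?_⟩
      by_cases hcase : ∀ a ∈ A', ∀ j : Fin n, k + 1 ≤ (j : ℕ) → (j : ℕ) < q → W a j = 0
      · -- `A'` has the largest conceivable suffix degree
        have hb : ∀ a ∈ A', sufDeg q (W a) = sufDeg (k + 1) (W x₀) := fun a ha => by
          rw [sufDeg_congr hq _ (hcase a ha)]
          have h1 := hD0 a (hA'A ha)
          have h2 := (Finset.mem_filter.1 ha).2
          rw [hstep, hstep] at h1
          omega
        have hb' : ∀ a ∈ Z, sufDeg q (W a) ≤ sufDeg (k + 1) (W x₀) := fun a ha => by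
          refine (sufDeg_anti hq _).trans ?_
          have h1 := hD1 a (hZY0 ha)
          have h2 := (Finset.mem_filter.1 (hZY ha)).2
          rw [hstep, hstep] at h1
          omega
        calc ∑ x ∈ Z, sufDeg q (W x) ≤ Z.card * sufDeg (k + 1) (W x₀) := by
              simpa using Finset.sum_le_card_nsmul Z _ _ hb'
          _ = ∑ x ∈ A', sufDeg q (W x) := by
              rw [Finset.sum_congr rfl hb, hZc]; simp
      · -- otherwise `A'` carries all the variables of index at least `q`
        push Not at hcase
        obtain ⟨a, ha, j, hj1, hj2, hj3⟩ := hcase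
        have h0 : ∑ x ∈ A', sufDeg q (W x) = ∑ x ∈ A, sufDeg q (W x) := by
          refine Finset.sum_subset hA'A fun x hx hx' => ?_
          have hne : W x i ≠ W x₀ i := fun h => hx' (Finset.mem_filter.2 ⟨hx, h⟩)
          have hai := (Finset.mem_filter.1 ha).2
          refine sufDeg_eq_zero _ fun p hp => ?_
          by_contra hp0
          have := hQ2 x (hAs hx) a (hAs (hA'A ha)) i
            (fun r hr => (hA x hx r ((hlt r).1 hr)).trans
              (hA a (hA'A ha) r ((hlt r).1 hr)).symm)
            (by have := (hAi x hx).1; omega) p j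
            (by rw [Fin.lt_def]; simp only [hi]; omega)
            (by rw [Fin.lt_def]; simp only [hi]; omega) (by omega) (by omega)
          rw [Fin.le_def] at this
          omega
        rw [h0]
        exact (Finset.sum_le_sum_of_subset hZY0).trans (hdom q (by omega))
  obtain ⟨A, Y, hAs, hYt, hc, hxA, -, hY, -⟩ := key n le_rfl
  have : 0 < Y.card := hc ▸ Finset.card_pos.2 ⟨x₀, hxA⟩
  obtain ⟨y, hy⟩ := Finset.card_pos.1 this
  obtain ⟨i, -, hi⟩ := hmax y (hYt hy)
  exact absurd (hY y hy i i.2) (by omega)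

/-! ### The monomial orders -/

theorem lexLT_iff {n : ℕ} (m m' : Mon n) : LexLT m m' ↔ toLex m < toLex m' :=
  Finsupp.Lex.lt_iff.symm

theorem LexLT.trans {n : ℕ} {a b c : Mon n} (h : LexLT a b) (h' : LexLT b c) : LexLT a c := by
  rw [lexLT_iff] at *
  exact h.trans h'

theorem not_lexLT_self {n : ℕ} (a : Mon n) : ¬ LexLT a a := by
  rw [lexLT_iff]
  exact lt_irrefl _

theorem lexLT_trichotomy {n : ℕ} (a b : Mon n) : LexLT a b ∨ a = b ∨ LexLT b a := by
  rw [lexLT_iff, lexLT_iff]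
  exact (lt_trichotomy (toLex a) (toLex b)).imp_right (Or.imp_left toLex.injective.eq_iff.1)

theorem revLexGT_iff {n : ℕ} (m m' : Mon n) : RevLexGT m m' ↔ toColex m < toColex m' :=
  Finsupp.Colex.lt_iff.symm

/-- The set `B` ordered lexicographically, so that `<^#` is the colexicographic order of exponent
vectors. It is a copy of the subtype `↥B`, which carries the componentwise order. -/
def LexIdx {n : ℕ} (B : Set (Mon n)) : Type := ↥B

noncomputable instance {n : ℕ} (B : Set (Mon n)) : LinearOrder (LexIdx B) :=
  LinearOrder.lift' (fun b : LexIdx B => toLex (b.1 : Mon n))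
    (fun _ _ h => Subtype.ext (toLex.injective h))

theorem sharpLT_iff {n : ℕ} {B : Set (Mon n)} (e e' : ↥B →₀ ℕ) :
    SharpLT e e' ↔ toColex (α := LexIdx B →₀ ℕ) e < toColex (α := LexIdx B →₀ ℕ) e' := by
  rw [Finsupp.Colex.lt_iff]
  refine exists_congr fun w => ?_
  rw [and_comm]
  exact and_congr_left fun _ => forall_congr' fun w' => by rw [lexLT_iff]; rfl

theorem sharpLT_trans {n : ℕ} {B : Set (Mon n)} {a b c : ↥B →₀ ℕ} (h : SharpLT a b)
    (h' : SharpLT b c) : SharpLT a c := by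
  rw [sharpLT_iff] at *
  exact h.trans h'

theorem sharpLT_total {n : ℕ} {B : Set (Mon n)} {a b : ↥B →₀ ℕ} (h : a ≠ b) :
    SharpLT a b ∨ SharpLT b a := by
  rw [sharpLT_iff, sharpLT_iff]
  exact lt_or_gt_of_ne fun h' => h (toColex.injective h')

theorem not_sharpLT_self {n : ℕ} {B : Set (Mon n)} (a : ↥B →₀ ℕ) : ¬ SharpLT a a := by
  rintro ⟨w, h, -⟩
  exact lt_irrefl _ h

theorem decRevLexLT_trans {n : ℕ} {a b c : Mon n} (h : DecRevLexLT a b) (h' : DecRevLexLT b c) :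
    DecRevLexLT a c := by
  simp only [DecRevLexLT, revLexGT_iff] at *
  rcases h with h | ⟨h1, h2⟩ <;> rcases h' with h' | ⟨h1', h2'⟩
  · left; omega
  · left; omega
  · left; omega
  · exact Or.inr ⟨h1.trans h1', h2.trans h2'⟩

theorem decRevLexLT_total {n : ℕ} {a b : Mon n} (h : a ≠ b) :
    DecRevLexLT a b ∨ DecRevLexLT b a := by
  simp only [DecRevLexLT, revLexGT_iff]
  have h1 := lt_or_gt_of_ne fun h' => h (toColex.injective h')
  rcases lt_trichotomy (mdeg a) (mdeg b) with h2 | h2 | h2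
  · exact Or.inl (Or.inl h2)
  · exact h1.imp (fun h3 => Or.inr ⟨h2, h3⟩) (fun h3 => Or.inr ⟨h2.symm, h3⟩)
  · exact Or.inr (Or.inl h2)

theorem not_decRevLexLT_self {n : ℕ} (a : Mon n) : ¬ DecRevLexLT a a := by
  simp [DecRevLexLT, revLexGT_iff]

/-- The order `<_σ^#` for which the Gröbner basis is computed. -/
abbrev RLT {n : ℕ} {B : Set (Mon n)} : ((Fin n ⊕ ↥B) →₀ ℕ) → ((Fin n ⊕ ↥B) →₀ ℕ) → Prop :=
  ProdLT DecRevLexLT SharpLT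

theorem prodLT_trans {n : ℕ} {B : Set (Mon n)} {a b c : (Fin n ⊕ ↥B) →₀ ℕ}
    (h : RLT a b) (h' : RLT b c) : RLT a c := by
  rcases h with h | ⟨h1, h2⟩ <;> rcases h' with h' | ⟨h1', h2'⟩
  · exact Or.inl (decRevLexLT_trans h h')
  · exact Or.inl (h1' ▸ h)
  · exact Or.inl (h1 ▸ h')
  · exact Or.inr ⟨h1.trans h1', sharpLT_trans h2 h2'⟩

theorem not_prodLT_self {n : ℕ} {B : Set (Mon n)} (a : (Fin n ⊕ ↥B) →₀ ℕ) : ¬ RLT a a := by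
  rintro (h | ⟨-, h⟩)
  · exact not_decRevLexLT_self _ h
  · exact not_sharpLT_self _ h

theorem prodLT_total {n : ℕ} {B : Set (Mon n)} {a b : (Fin n ⊕ ↥B) →₀ ℕ} (h : a ≠ b) :
    RLT a b ∨ RLT b a := by
  by_cases h1 : sPart a = sPart b
  · by_cases h2 : tPart a = tPart b
    · exact absurd (Finsupp.sumFinsuppEquivProdFinsupp.injective (Prod.ext h1 h2)) h
    · exact (sharpLT_total h2).imp (fun h3 => Or.inr ⟨h1, h3⟩) (fun h3 => Or.inr ⟨h1.symm, h3⟩)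
  · exact (decRevLexLT_total h1).imp Or.inl Or.inl

theorem exists_isLeadMon {n : ℕ} {K : Type*} [Field K] {B : Set (Mon n)}
    {f : MvPolynomial (Fin n ⊕ ↥B) K} (hf : f ≠ 0) : ∃ m, IsLeadMon RLT f m := by
  classical
  have key : ∀ s : Finset ((Fin n ⊕ ↥B) →₀ ℕ), s.Nonempty →
      ∃ m ∈ s, ∀ m' ∈ s, m' ≠ m → RLT m' m := by
    intro s hs
    induction hs using Finset.Nonempty.cons_induction with
    | singleton a => exact ⟨a, by simp, by simp⟩
    | cons a s ha hs ih =>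
      obtain ⟨m, hm, hmax⟩ := ih
      have hne : a ≠ m := fun h => ha (h ▸ hm)
      rcases prodLT_total hne with h | h
      · refine ⟨m, by simp [hm], fun m' hm' hne' => ?_⟩
        rcases Finset.mem_cons.1 hm' with rfl | h'
        · exact h
        · exact hmax m' h' hne'
      · refine ⟨a, by simp, fun m' hm' hne' => ?_⟩
        rcases Finset.mem_cons.1 hm' with h' | h'
        · exact absurd h' hne'
        · by_cases h2 : m' = m
          · exact h2 ▸ h
          · exact prodLT_trans (hmax m' h' h2) h
  exact key f.support (MvPolynomial.support_nonempty.2 hf)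

theorem isLeadMon_binomial {α K : Type*} [Field K] {lt : (α →₀ ℕ) → (α →₀ ℕ) → Prop}
    {A A' : α →₀ ℕ} (hne : A' ≠ A) (h : lt A' A) :
    IsLeadMon lt (MvPolynomial.monomial A (1 : K) - MvPolynomial.monomial A' 1) A := by
  classical
  refine ⟨?_, fun m hm hmA => ?_⟩
  · simp [MvPolynomial.mem_support_iff, hne]
  · have hm' : m = A' := by
      by_contra hcon
      rw [MvPolynomial.mem_support_iff] at hm
      simp [Ne.symm hmA, Ne.symm hcon] at hm
    exact hm' ▸ h

/-! ### The fibers of `φ` -/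

theorem sPart_apply {n : ℕ} {B : Set (Mon n)} (m : (Fin n ⊕ ↥B) →₀ ℕ) (i : Fin n) :
    sPart m i = m (Sum.inl i) := rfl

theorem tPart_apply {n : ℕ} {B : Set (Mon n)} (m : (Fin n ⊕ ↥B) →₀ ℕ) (b : ↥B) :
    tPart m b = m (Sum.inr b) := rfl

theorem sPart_add {n : ℕ} {B : Set (Mon n)} (m m' : (Fin n ⊕ ↥B) →₀ ℕ) :
    sPart (m + m') = sPart m + sPart m' := by
  ext i; rfl

theorem tPart_add {n : ℕ} {B : Set (Mon n)} (m m' : (Fin n ⊕ ↥B) →₀ ℕ) :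
    tPart (m + m') = tPart m + tPart m' := by
  ext i; rfl

theorem sPart_inl {n : ℕ} {B : Set (Mon n)} (i : Fin n) (k : ℕ) :
    sPart (Finsupp.single (Sum.inl i : Fin n ⊕ ↥B) k) = Finsupp.single i k := by
  classical
  ext j; simp [sPart_apply, Finsupp.single_apply]

theorem sPart_inr {n : ℕ} {B : Set (Mon n)} (b : ↥B) (k : ℕ) :
    sPart (Finsupp.single (Sum.inr b : Fin n ⊕ ↥B) k) = 0 := by
  classical
  ext j; simp [sPart_apply]

theorem tPart_inl {n : ℕ} {B : Set (Mon n)} (i : Fin n) (k : ℕ) :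
    tPart (Finsupp.single (Sum.inl i : Fin n ⊕ ↥B) k) = 0 := by
  classical
  ext j; simp [tPart_apply]

theorem tPart_inr {n : ℕ} {B : Set (Mon n)} (b : ↥B) (k : ℕ) :
    tPart (Finsupp.single (Sum.inr b : Fin n ⊕ ↥B) k) = Finsupp.single b k := by
  classical
  ext j; simp [tPart_apply, Finsupp.single_apply]

theorem expandB_add {n : ℕ} {B : Set (Mon n)} (e e' : ↥B →₀ ℕ) :
    expandB (e + e') = expandB e + expandB e' := by
  classical
  exact Finsupp.sum_add_index' (by simp) (by intros; rw [add_smul])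

theorem edeg_add {n : ℕ} {B : Set (Mon n)} (e e' : ↥B →₀ ℕ) :
    edeg (e + e') = edeg e + edeg e' := by
  classical
  exact Finsupp.sum_add_index' (by simp) (by simp)

theorem expandB_single {n : ℕ} {B : Set (Mon n)} (b : ↥B) (k : ℕ) :
    expandB (Finsupp.single b k) = k • (b : Mon n) := by
  simp [expandB]

theorem edeg_single {n : ℕ} {B : Set (Mon n)} (b : ↥B) (k : ℕ) :
    edeg (Finsupp.single b k) = k := by
  simp [edeg]

theorem expandB_apply {n : ℕ} {B : Set (Mon n)} (e : ↥B →₀ ℕ) (j : Fin n) :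
    expandB e j = ∑ b ∈ e.support, e b * (b : Mon n) j := by
  simp [expandB, Finsupp.sum, Finsupp.finsetSum_apply]

/-- The exponent of the image in `S` of a monomial of `𝒯` under `T_w ↦ w`; together with the
`t`-degree `edeg (tPart m)` it determines the monomial `φ(m)`. -/
noncomputable def img {n : ℕ} {B : Set (Mon n)} (m : (Fin n ⊕ ↥B) →₀ ℕ) : Mon n :=
  sPart m + expandB (tPart m)

theorem reesPhi_monomial {n : ℕ} (K : Type*) [Field K] {B : Set (Mon n)}
    (m : (Fin n ⊕ ↥B) →₀ ℕ) (c : K) :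
    reesPhi K B (MvPolynomial.monomial m c) =
      Polynomial.monomial (edeg (tPart m)) (MvPolynomial.monomial (img m) c) := by
  have h1 : reesPhi K B (MvPolynomial.monomial m 1) =
      Polynomial.monomial (edeg (tPart m)) (MvPolynomial.monomial (img m) 1) := by
    induction m using Finsupp.induction_linear with
    | zero =>
      have e1 : tPart (0 : (Fin n ⊕ ↥B) →₀ ℕ) = 0 := by ext; rfl
      have e2 : sPart (0 : (Fin n ⊕ ↥B) →₀ ℕ) = 0 := by ext; rfl
      rw [img, e1, e2]
      simp [edeg, expandB]
    | add f g hf hg =>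
      have : MvPolynomial.monomial (f + g) (1 : K) =
          MvPolynomial.monomial f 1 * MvPolynomial.monomial g 1 := by
        rw [MvPolynomial.monomial_mul, mul_one]
      rw [this, map_mul, hf, hg, Polynomial.monomial_mul_monomial, MvPolynomial.monomial_mul,
        mul_one, tPart_add, edeg_add]
      congr 2
      rw [img, img, img, sPart_add, tPart_add, expandB_add]
      congr 1
      abel
    | single a k =>
      rcases a with i | b
      · rw [img, sPart_inl, tPart_inl, reesPhi, MvPolynomial.aeval_monomial]
        simp [edeg, expandB, ← MvPolynomial.X_pow_eq_monomial]
      · rw [img, sPart_inr, tPart_inr, reesPhi, MvPolynomial.aeval_monomial]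
        simp [edeg, expandB, mul_pow, MvPolynomial.monomial_pow, ← Polynomial.C_pow,
          Polynomial.C_mul_X_pow_eq_monomial]
  have h2 : MvPolynomial.monomial m c = c • MvPolynomial.monomial m (1 : K) := by
    simp [MvPolynomial.smul_monomial]
  rw [h2, map_smul, h1, Polynomial.smul_monomial, MvPolynomial.smul_monomial]
  simp

theorem binomial_mem_reesP {n : ℕ} (K : Type*) [Field K] {B : Set (Mon n)}
    {m m' : (Fin n ⊕ ↥B) →₀ ℕ} (h1 : edeg (tPart m) = edeg (tPart m'))
    (h2 : img m = img m') :
    MvPolynomial.monomial m (1 : K) - MvPolynomial.monomial m' 1 ∈ reesP K B := by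
  change reesPhi K B _ = 0
  rw [map_sub, reesPhi_monomial, reesPhi_monomial, h1, h2, sub_self]

/-- Every monomial of an element of `P` shares its image under `φ` with another one, since the
coefficients over each fiber of `φ` sum to zero. -/
theorem exists_fiber_ne {n : ℕ} {K : Type*} [Field K] {B : Set (Mon n)}
    {f : MvPolynomial (Fin n ⊕ ↥B) K} (hf : f ∈ reesP K B) {m : (Fin n ⊕ ↥B) →₀ ℕ}
    (hm : m ∈ f.support) :
    ∃ m' ∈ f.support, m' ≠ m ∧ edeg (tPart m') = edeg (tPart m) ∧ img m' = img m := by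
  classical
  by_contra! hcon
  have h0 : reesPhi K B f = 0 := hf
  rw [MvPolynomial.as_sum f, map_sum] at h0
  have h1 := congrArg (fun p => MvPolynomial.coeff (img m) (Polynomial.coeff p (edeg (tPart m)))) h0
  simp only [reesPhi_monomial, Polynomial.finsetSum_coeff, MvPolynomial.coeff_sum,
    Polynomial.coeff_monomial, Polynomial.coeff_zero, MvPolynomial.coeff_zero] at h1
  rw [Finset.sum_eq_single m] at h1
  · rw [if_pos rfl, MvPolynomial.coeff_monomial, if_pos rfl] at h1
    exact (MvPolynomial.mem_support_iff.1 hm) h1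
  · intro m' hm' hne
    split_ifs with h
    · rw [MvPolynomial.coeff_monomial, if_neg (hcon m' hm' hne h)]
    · simp
  · exact fun h => absurd hm h

/-! ### Exchanges between two factors -/

theorem mdeg_add {n : ℕ} (a b : Mon n) : mdeg (a + b) = mdeg a + mdeg b := by
  simp [mdeg, Finset.sum_add_distrib]

theorem mdeg_single {n : ℕ} (i : Fin n) (k : ℕ) : mdeg (Finsupp.single i k) = k := by
  classical
  simp [mdeg, Finsupp.single_apply]

theorem mdeg_expandB {n : ℕ} {B : Set (Mon n)} {d : ℕ} (hB : ∀ b ∈ B, mdeg b = d)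
    (e : ↥B →₀ ℕ) : mdeg (expandB e) = edeg e * d := by
  simp only [mdeg, expandB_apply, edeg, Finsupp.sum]
  rw [Finset.sum_comm, Finset.sum_mul]
  refine Finset.sum_congr rfl fun b _ => ?_
  rw [← Finset.mul_sum]
  exact congrArg _ (hB b b.2)

theorem mem_lSeg_of_between {n : ℕ} {u v w w' x : Mon n} {d : ℕ} (hw : w ∈ LSeg u v d)
    (hw' : w' ∈ LSeg u v d) (hx : mdeg x = d) (h : LexLT x w) (h' : LexLT w' x) :
    x ∈ LSeg u v d := by
  refine ⟨hx, Or.inr ?_, Or.inr ?_⟩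
  · rcases hw.2.1 with h1 | h1
    · exact h1 ▸ h
    · exact h.trans h1
  · rcases hw'.2.2 with h1 | h1
    · exact h1 ▸ h'
    · exact h1.trans h'

/-- The pairs of a lexsegment that admit an improvement. If `w` and `w'` first differ at `i`,
`x_q` divides `w` and a later `x_p` divides `w'`, then swapping these two variables gives a pair
strictly between `w'` and `w`; for `q = i` this requires the exponents to differ by two. -/
theorem exists_exchange {n : ℕ} {u v w w' : Mon n} {d : ℕ} (hw : w ∈ LSeg u v d)
    (hw' : w' ∈ LSeg u v d) {i p q : Fin n} (hagree : ∀ j, j < i → w' j = w j)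
    (hi : w' i < w i) (hiq : i ≤ q) (hqp : q < p) (hp : 0 < w' p) (hq : 0 < w q)
    (hqi : q = i → w' i + 2 ≤ w i) :
    ∃ y ∈ LSeg u v d, ∃ z ∈ LSeg u v d, y + z = w + w' ∧ LexLT y w ∧ LexLT z w := by
  classical
  set y : Mon n := w - Finsupp.single q 1 + Finsupp.single p 1 with hy
  set z : Mon n := w' - Finsupp.single p 1 + Finsupp.single q 1 with hz
  have hpq : p ≠ q := hqp.ne'
  have hip : i < p := hiq.trans_lt hqp
  have hyj : ∀ j, y j + (if j = q then 1 else 0) = w j + (if j = p then 1 else 0) := by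
    intro j
    simp only [hy, Finsupp.add_apply, Finsupp.tsub_apply, Finsupp.single_apply, eq_comm (b := j)]
    by_cases h : j = q
    · subst h; simp only [if_true]; omega
    · simp [h]
  have hzj : ∀ j, z j + (if j = p then 1 else 0) = w' j + (if j = q then 1 else 0) := by
    intro j
    simp only [hz, Finsupp.add_apply, Finsupp.tsub_apply, Finsupp.single_apply, eq_comm (b := j)]
    by_cases h : j = p
    · subst h; simp only [if_true]; omega
    · simp [h]
  clear_value y z
  have hydeg : mdeg y = d := by
    have : y + Finsupp.single q 1 = w + Finsupp.single p 1 := by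
      ext j
      simpa [Finsupp.single_apply, eq_comm (b := j)] using hyj j
    have h2 := congrArg mdeg this
    rw [mdeg_add, mdeg_add, mdeg_single, mdeg_single, hw.1] at h2
    omega
  have hzdeg : mdeg z = d := by
    have : z + Finsupp.single p 1 = w' + Finsupp.single q 1 := by
      ext j
      simpa [Finsupp.single_apply, eq_comm (b := j)] using hzj j
    have h2 := congrArg mdeg this
    rw [mdeg_add, mdeg_add, mdeg_single, mdeg_single, hw'.1] at h2
    omega
  have hyw : LexLT y w := by
    refine ⟨q, fun j hj => ?_, ?_⟩
    · simpa [hj.ne, (hj.trans hqp).ne] using hyj j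
    · have := hyj q
      simp only [if_true, hpq.symm, if_false] at this
      omega
  have hwy : LexLT w' y := by
    refine ⟨i, fun j hj => ?_, ?_⟩
    · have := hyj j
      simp only [(hj.trans_le hiq).ne, (hj.trans hip).ne, if_false] at this
      have := hagree j hj
      omega
    · have := hyj i
      simp only [hip.ne, if_false] at this
      by_cases h : q = i
      · have := hqi h
        split_ifs at * <;> omega
      · simp only [Ne.symm h, if_false] at this
        omega
  have hzw : LexLT z w := by
    refine ⟨i, fun j hj => ?_, ?_⟩
    · have := hzj j
      simp only [(hj.trans_le hiq).ne, (hj.trans hip).ne, if_false] at this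
      have := hagree j hj
      omega
    · have := hzj i
      simp only [hip.ne, if_false] at this
      by_cases h : q = i
      · have := hqi h
        split_ifs at * <;> omega
      · simp only [Ne.symm h, if_false] at this
        omega
  have hwz : LexLT w' z := by
    refine ⟨q, fun j hj => ?_, ?_⟩
    · simpa [hj.ne, (hj.trans hqp).ne] using (hzj j).symm
    · have := hzj q
      simp only [if_true, hpq.symm, if_false] at this
      omega
  refine ⟨y, mem_lSeg_of_between hw hw' hydeg hyw hwy, z,
    mem_lSeg_of_between hw hw' hzdeg hzw hwz, ?_, hyw, hzw⟩
  ext j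
  have h1 := hyj j
  have h2 := hzj j
  simp only [Finsupp.add_apply]
  omega

/-- A monomial in the `T_w` that is not minimal in its fiber contains a pair admitting an
improvement; this makes the quadratic binomials a Gröbner basis of the toric ideal of an arbitrary
lexsegment. -/
theorem exists_T_move {n : ℕ} {u v : Mon n} {d : ℕ} {e e' : ↥(LSeg u v d) →₀ ℕ}
    (hdeg : edeg e = edeg e') (hexp : expandB e = expandB e') (hlt : SharpLT e e') :
    ∃ w w' y z : ↥(LSeg u v d), w ≠ w' ∧ 0 < e' w ∧ 0 < e' w' ∧
      (y : Mon n) + z = w + w' ∧ LexLT (y : Mon n) w ∧ LexLT (z : Mon n) w := by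
  classical
  by_contra hno
  have hno' : ∀ w w' : ↥(LSeg u v d), 0 < e' w → 0 < e' w' → ∀ i p q : Fin n,
      (∀ j, j < i → (w' : Mon n) j = (w : Mon n) j) → (w' : Mon n) i < (w : Mon n) i → i ≤ q →
      q < p → 0 < (w' : Mon n) p → 0 < (w : Mon n) q →
      (q = i → (w' : Mon n) i + 2 ≤ (w : Mon n) i) → False := by
    intro w w' h1 h2 i p q h3 h4 h5 h6 h7 h8 h9
    obtain ⟨y, hy, z, hz, h⟩ := exists_exchange w.2 w'.2 h3 h4 h5 h6 h7 h8 h9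
    exact hno ⟨w, w', ⟨y, hy⟩, ⟨z, hz⟩, fun h => by rw [h] at h4; omega, h1, h2, h⟩
  obtain ⟨w₀, hw₀, habove⟩ := hlt
  -- Cancel the common factors of the two monomials and list the remaining ones.
  set g : ↥(LSeg u v d) →₀ ℕ := e' - e with hg
  set h : ↥(LSeg u v d) →₀ ℕ := e - e' with hh
  have hadd : e' + h = e + g := by
    ext b
    simp only [hg, hh, Finsupp.add_apply, Finsupp.tsub_apply]
    omega
  have hdeg' : edeg g = edeg h := by
    have := congrArg edeg hadd
    rw [edeg_add, edeg_add] at this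
    omega
  have hexp' : expandB g = expandB h := by
    have := congrArg expandB hadd
    rw [expandB_add, expandB_add, hexp] at this
    exact (add_left_cancel this).symm
  let F : (↥(LSeg u v d) →₀ ℕ) → Finset (Σ _ : ↥(LSeg u v d), ℕ) := fun r =>
    r.support.sigma fun b => Finset.range (r b)
  have hF : ∀ r x, x ∈ F r ↔ x.2 < r x.1 := by
    intro r x
    simp only [F, Finset.mem_sigma, Finsupp.mem_support_iff, Finset.mem_range]
    omega
  have hFcard : ∀ r, (F r).card = edeg r := by
    intro r
    simp [F, edeg, Finsupp.sum]
  have hFsum : ∀ r (j : Fin n), ∑ x ∈ F r, (x.1 : Mon n) j = expandB r j := by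
    intro r j
    rw [expandB_apply, Finset.sum_sigma]
    simp
  have hgpos : ∀ x ∈ F g, e x.1 < e' x.1 := by
    intro x hx
    have := (hF g x).1 hx
    simp only [hg, Finsupp.tsub_apply] at this
    omega
  refine no_smaller_family (fun x : (Σ _ : ↥(LSeg u v d), ℕ) => ((x.1 : Mon n) : Fin n → ℕ)) d
    (F g) (F h) (fun x _ => x.1.2.1) (fun x _ => x.1.2.1) (by rw [hFcard, hFcard, hdeg'])
    (fun j => by rw [hFsum, hFsum, hexp']) ⟨w₀, 0⟩ ?_ ?_ ?_ ?_
  · rw [hF]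
    simp only [hg, Finsupp.tsub_apply]
    omega
  · intro y hy
    have := (hF h y).1 hy
    simp only [hh, Finsupp.tsub_apply] at this
    rcases lexLT_trichotomy (y.1 : Mon n) (w₀ : Mon n) with h1 | h1 | h1
    · exact h1
    · rw [Subtype.ext h1] at this
      omega
    · have := habove _ h1
      omega
  · intro x hx i hagree
    simp only at hagree ⊢
    have hpos := hgpos x hx
    rcases lexLT_trichotomy (x.1 : Mon n) (w₀ : Mon n) with h1 | h1 | h1
    · obtain ⟨k, hk1, hk2⟩ := h1
      rcases lt_trichotomy k i with h2 | h2 | h2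
      · have := hagree k h2
        omega
      · subst h2
        refine ⟨hk2.le, ?_⟩
        by_contra hcon
        -- equal degrees force a later variable of larger exponent in the smaller monomial
        obtain ⟨p, hp⟩ : ∃ p, (w₀ : Mon n) p < (x.1 : Mon n) p := by
          by_contra! hall
          have := Finset.sum_lt_sum (fun j (_ : j ∈ Finset.univ) => hall j)
            ⟨k, Finset.mem_univ k, hk2⟩
          have h3 : mdeg (x.1 : Mon n) = mdeg (w₀ : Mon n) := x.1.2.1.trans w₀.2.1.symm
          exact absurd h3 this.ne
        have hkp : k < p := by
          rcases lt_trichotomy p k with h3 | h3 | h3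
          · have := hk1 p h3
            omega
          · subst h3; omega
          · exact h3
        exact hno' w₀ x.1 (by omega) (by omega) k p k hk1 hk2 le_rfl hkp (by omega) (by omega)
          (fun _ => by omega)
      · have := hk1 i h2
        omega
    · rw [h1]
      omega
    · have := habove _ h1
      omega
  · intro x hx y hy i hagree hi p q hp hq hxp hyq
    have h1 := hgpos x hx
    have h2 := hgpos y hy
    by_contra hpq
    exact hno' y.1 x.1 (by omega) (by omega) i p q hagree hi hq.le (not_le.1 hpq) hxp hyq
      (fun h => absurd h hq.ne')

/-! ### Exchanges between a variable of `S` and a factor -/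

/-- Monomials `≥_lex v` involve one of the first `l` variables; `le_of_small_var` is the converse
in degree `d`. -/
theorem exists_small_var {n l d : ℕ} (h1 : l - 1 < n) (h2 : n - 1 < n) {w : Mon n}
    (h : LexLE (Finsupp.single (⟨l - 1, h1⟩ : Fin n) 1 +
      Finsupp.single (⟨n - 1, h2⟩ : Fin n) (d - 1)) w) (hl : 1 ≤ l) :
    ∃ j : Fin n, (j : ℕ) < l ∧ 0 < w j := by
  classical
  rcases h with h | ⟨i, hi1, hi2⟩
  · refine ⟨⟨l - 1, h1⟩, by simp only; omega, ?_⟩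
    rw [← h]
    simp
  · by_cases hil : (i : ℕ) < l
    · exact ⟨i, hil, by omega⟩
    · refine ⟨⟨l - 1, h1⟩, by simp only; omega, ?_⟩
      rw [← hi1 ⟨l - 1, h1⟩ (by rw [Fin.lt_def]; simp only; omega)]
      simp

theorem le_of_small_var {n l d : ℕ} (h1 : l - 1 < n) (h2 : n - 1 < n) {w : Mon n}
    (hd : 1 ≤ d) (hw : mdeg w = d) (hl : 1 ≤ l) (hln : l ≤ n - 1) (j : Fin n)
    (hj : (j : ℕ) < l) (hwj : 0 < w j) :
    LexLE (Finsupp.single (⟨l - 1, h1⟩ : Fin n) 1 +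
      Finsupp.single (⟨n - 1, h2⟩ : Fin n) (d - 1)) w := by
  classical
  set v : Mon n := Finsupp.single (⟨l - 1, h1⟩ : Fin n) 1 +
      Finsupp.single (⟨n - 1, h2⟩ : Fin n) (d - 1) with hv
  have hvd : mdeg v = d := by
    rw [hv, mdeg_add, mdeg_single, mdeg_single]
    omega
  have hvk : ∀ k : Fin n, v k = (if (k : ℕ) = l - 1 then 1 else 0) +
      (if (k : ℕ) = n - 1 then d - 1 else 0) := by
    intro k
    simp only [hv, Finsupp.add_apply, Finsupp.single_apply, Fin.ext_iff, eq_comm (b := (k : ℕ))]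
  rcases lexLT_trichotomy v w with h | h | ⟨i, hi1, hi2⟩
  · exact Or.inr h
  · exact Or.inl h
  · exfalso
    have h3 := hvk i
    by_cases hil : (i : ℕ) = l - 1
    · rw [if_pos hil, if_neg (by omega)] at h3
      have h4 : j = i ∨ j < i := by
        rw [Fin.ext_iff, Fin.lt_def]; omega
      rcases h4 with h4 | h4
      · subst h4; omega
      · have h5 := hi1 j h4
        rw [Fin.lt_def] at h4
        rw [hvk j, if_neg (by omega), if_neg (by omega)] at h5
        omega
    · rw [if_neg hil] at h3
      have hin : (i : ℕ) = n - 1 := by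
        by_contra h
        rw [if_neg h] at h3
        omega
      have : mdeg w < mdeg v := by
        refine Finset.sum_lt_sum (fun k _ => ?_) ⟨i, Finset.mem_univ i, hi2⟩
        by_cases hk : k = i
        · rw [hk]; exact hi2.le
        · refine (hi1 k ?_).le
          have := k.2
          have : (k : ℕ) ≠ i := fun h => hk (Fin.ext h)
          rw [Fin.lt_def]; omega
      omega

/-- The exchange between `x`- and `T`-variables. If the `S`-part `a'` is not the smallest one over
its image, some `x_i` dividing it can be traded for an `x_j`, `j < i`, taken from one of the
factors `w`. Otherwise, with `i` the last index at which the exponent of `a'` is too large,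
all factors are free of `x_j` for `j < i` when `i < l`, and for `i ≥ l` each factor has exactly
degree one in the first `l` variables and is free of `x_j` for `l ≤ j < i`; in both cases `a`
would have smaller degree than `a'`. -/
theorem exists_S_move {n l d : ℕ} (h1 : l - 1 < n) (h2 : n - 1 < n) (hd : 1 ≤ d)
    (hl : 1 ≤ l) (hln : l ≤ n - 1) {u v : Mon n}
    (hv : v = Finsupp.single (⟨l - 1, h1⟩ : Fin n) 1 +
      Finsupp.single (⟨n - 1, h2⟩ : Fin n) (d - 1))
    {a a' : Mon n} {e e' : ↥(LSeg u v d) →₀ ℕ} (hdeg : edeg e = edeg e')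
    (himg : a + expandB e = a' + expandB e') (hlt : DecRevLexLT a a') :
    ∃ (i j : Fin n) (w w' : ↥(LSeg u v d)), j < i ∧ 0 < a' i ∧ 0 < e' w ∧
      Finsupp.single i 1 + (w : Mon n) = Finsupp.single j 1 + (w' : Mon n) := by
  classical
  by_contra hno
  have hmd : mdeg a = mdeg a' := by
    have := congrArg mdeg himg
    rw [mdeg_add, mdeg_add, mdeg_expandB (fun b hb => hb.1), mdeg_expandB (fun b hb => hb.1),
      hdeg] at this
    omega
  -- replacing `x_j` by `x_i` in a factor of `e'` has to leave the lexsegment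
  have hout : ∀ i j k : Fin n, j < i → 0 < a' i → ∀ w : ↥(LSeg u v d), 0 < e' w →
      0 < (w : Mon n) j → (k : ℕ) < l →
      0 < ((w : Mon n) - Finsupp.single j 1 + Finsupp.single i 1 : Mon n) k → False := by
    intro i j k hji hai w hew hwj hk hpos
    set w' : Mon n := (w : Mon n) - Finsupp.single j 1 + Finsupp.single i 1 with hw'
    have heq : Finsupp.single i 1 + (w : Mon n) = Finsupp.single j 1 + w' := by
      have : Finsupp.single j 1 ≤ (w : Mon n) := by
        rw [Finsupp.single_le_iff]; omega
      rw [hw', ← add_assoc, add_tsub_cancel_of_le this, add_comm]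
    have hdw : mdeg w' = d := by
      have := congrArg mdeg heq
      rw [mdeg_add, mdeg_add, mdeg_single, mdeg_single, w.2.1] at this
      omega
    have hlow : LexLE v w' := by
      rw [hv]; exact le_of_small_var h1 h2 hd hdw hl hln k hk hpos
    have hww : LexLT w' (w : Mon n) := by
      refine ⟨j, fun r hr => ?_, ?_⟩
      · simp [hw', hr.ne', (hr.trans hji).ne']
      · simp only [hw', Finsupp.add_apply, Finsupp.tsub_apply, Finsupp.single_apply, if_true,
          hji.ne', if_false]
        omega
    have hup : LexLE w' u := by
      rcases w.2.2.1 with h | h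
      · exact Or.inr (h ▸ hww)
      · exact Or.inr (hww.trans h)
    exact hno ⟨i, j, w, ⟨w', hdw, hup, hlow⟩, hji, hai, hew, heq⟩
  have hpt : ∀ j, a j + expandB e j = a' j + expandB e' j := fun j => DFunLike.congr_fun himg j
  rcases hlt with h | ⟨-, i, hi1, hi2⟩
  · omega
  have hai : 0 < a' i := by omega
  -- a variable missing from all factors of `e'` does not have a larger exponent in `a`
  have hfree : ∀ j, (∀ w : ↥(LSeg u v d), 0 < e' w → (w : Mon n) j = 0) → a j ≤ a' j := by
    intro j hj
    have h0 : expandB e' j = 0 := by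
      rw [expandB_apply]
      refine Finset.sum_eq_zero fun w hw => ?_
      rw [hj w (Nat.pos_of_ne_zero (Finsupp.mem_support_iff.1 hw)), mul_zero]
    have := hpt j
    omega
  by_cases hil : (i : ℕ) < l
  · have : mdeg a < mdeg a' := by
      refine Finset.sum_lt_sum (fun j _ => ?_) ⟨i, Finset.mem_univ i, hi2⟩
      rcases lt_trichotomy j i with h | h | h
      · refine hfree j fun w hw => ?_
        by_contra hne
        exact hout i j i h hai w hw (Nat.pos_of_ne_zero hne) hil (by simp)
      · rw [h]; exact hi2.le
      · exact (hi1 j h).le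
    omega
  · have hsmall : ∀ w : ↥(LSeg u v d), ∃ k : Fin n, (k : ℕ) < l ∧ 0 < (w : Mon n) k := fun w =>
      exists_small_var h1 h2 (by rw [← hv]; exact w.2.2.2) hl
    have hmid : ∀ j : Fin n, l ≤ (j : ℕ) → j < i → a j ≤ a' j := by
      intro j hj hji
      refine hfree j fun w hw => ?_
      by_contra hne
      obtain ⟨k, hk, hwk⟩ := hsmall w
      have hkj : j ≠ k := fun h => by rw [h] at hj; omega
      exact hout i j k hji hai w hw (Nat.pos_of_ne_zero hne) hk
        (by simp [Finsupp.single_apply, hkj]; omega)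
    set L : Finset (Fin n) := Finset.univ.filter fun j => (j : ℕ) < l with hL
    have hge : ∀ w : ↥(LSeg u v d), 1 ≤ ∑ j ∈ L, (w : Mon n) j := by
      intro w
      obtain ⟨k, hk, hwk⟩ := hsmall w
      have := Finset.single_le_sum (f := fun j => (w : Mon n) j) (fun j _ => Nat.zero_le _)
        (show k ∈ L by simp [hL, hk])
      omega
    have hle : ∀ w : ↥(LSeg u v d), 0 < e' w → ∑ j ∈ L, (w : Mon n) j ≤ 1 := by
      intro w hw
      obtain ⟨k, hk, hwk⟩ := hsmall w
      have hki : k < i := by rw [Fin.lt_def]; omega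
      have hkL : k ∈ L := by simp [hL, hk]
      have hout' : ∀ r : Fin n, (r : ℕ) < l →
          ((w : Mon n) - Finsupp.single k 1 + Finsupp.single i 1 : Mon n) r = 0 := fun r hr =>
        Nat.eq_zero_of_not_pos fun hpos => hout i k r hki hai w hw hwk hr hpos
      rw [← Finset.add_sum_erase _ _ hkL, Finset.sum_eq_zero]
      · have := hout' k hk
        simp only [Finsupp.add_apply, Finsupp.tsub_apply, Finsupp.single_eq_same] at this
        omega
      · intro r hr
        have hrk : r ≠ k := (Finset.mem_erase.1 hr).1
        have := hout' r (by simpa [hL] using (Finset.mem_erase.1 hr).2)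
        simp only [Finsupp.add_apply, Finsupp.tsub_apply, Finsupp.single_apply, hrk.symm,
          if_false] at this
        omega
    have hLsum : ∀ r : ↥(LSeg u v d) →₀ ℕ,
        ∑ j ∈ L, expandB r j = ∑ w ∈ r.support, r w * ∑ j ∈ L, (w : Mon n) j := by
      intro r
      simp only [expandB_apply]
      rw [Finset.sum_comm]
      exact Finset.sum_congr rfl fun w _ => (Finset.mul_sum _ _ _).symm
    have hLe : edeg e ≤ ∑ j ∈ L, expandB e j := by
      rw [hLsum]
      exact Finset.sum_le_sum fun w _ => Nat.le_mul_of_pos_right _ (hge w)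
    have hLe' : ∑ j ∈ L, expandB e' j ≤ edeg e' := by
      rw [hLsum]
      refine Finset.sum_le_sum fun w hw => ?_
      have := hle w (Nat.pos_of_ne_zero (Finsupp.mem_support_iff.1 hw))
      exact (Nat.mul_le_mul_left _ this).trans (mul_one _).le
    have hLa : ∑ j ∈ L, a j ≤ ∑ j ∈ L, a' j := by
      have := Finset.sum_congr rfl fun j (_ : j ∈ L) => hpt j
      rw [Finset.sum_add_distrib, Finset.sum_add_distrib] at this
      omega
    have hRa : ∑ j ∈ Lᶜ, a j < ∑ j ∈ Lᶜ, a' j := by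
      refine Finset.sum_lt_sum (fun j hj => ?_) ⟨i, by simp [hL]; omega, hi2⟩
      have hj' : l ≤ (j : ℕ) := by simpa [hL] using hj
      rcases lt_trichotomy j i with h | h | h
      · exact hmid j hj' h
      · rw [h]; exact hi2.le
      · exact (hi1 j h).le
    have e1 : mdeg a = ∑ j ∈ L, a j + ∑ j ∈ Lᶜ, a j := (Finset.sum_add_sum_compl L _).symm
    have e2 : mdeg a' = ∑ j ∈ L, a' j + ∑ j ∈ Lᶜ, a' j := (Finset.sum_add_sum_compl L _).symm
    omega

/-- for `2 ≤ l ≤ n-1`, `u = x_1 x_{l+1}^{a_{l+1}}⋯x_n^{a_n}` and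
`v = x_l x_n^{d-1}` of degree `d` with `u ≥_lex v`, the toric ideal `P` of the Rees
algebra of `I = (L(u,v))` has, with respect to the product order `<_σ^#` (`<^#` the
lexicographic order on `R` induced by `T_{w_1} > T_{w_2}` iff `w_1 >_lex w_2`, and `<_σ`
the decreasing revlexicographic order on `S`), a Gröbner basis consisting of binomials
of the forms `T_w T_{w'} - T_{w''} T_{w'''}` and `x_i T_w - x_j T_{w'}`; in particular a
Gröbner basis all of whose elements have total degree `2`. -/
theorem stmt15 {n : ℕ} (K : Type*) [Field K] (l d : ℕ)
    (hl : 2 ≤ l) (hln : l ≤ n - 1) (hd : 2 ≤ d)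
    (u v : Mon n) (hud : mdeg u = d)
    (hu1 : u ⟨0, by omega⟩ = 1)
    (humid : ∀ i : Fin n, 1 ≤ (i : ℕ) → (i : ℕ) < l → u i = 0)
    (hv : v = Finsupp.single (⟨l - 1, by omega⟩ : Fin n) 1 +
      Finsupp.single (⟨n - 1, by omega⟩ : Fin n) (d - 1))
    (huv : LexLE v u) :
    ∃ G : Set (MvPolynomial (Fin n ⊕ ↥(LSeg u v d)) K),
      (∀ g ∈ G, g ∈ reesP K (LSeg u v d)) ∧
      IsGB (ProdLT DecRevLexLT SharpLT) (reesP K (LSeg u v d)) G ∧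
      ∀ g ∈ G,
        (∃ a b c e : ↥(LSeg u v d),
          g = MvPolynomial.X (Sum.inr a) * MvPolynomial.X (Sum.inr b) -
              MvPolynomial.X (Sum.inr c) * MvPolynomial.X (Sum.inr e)) ∨
        (∃ (i j : Fin n) (a b : ↥(LSeg u v d)),
          g = MvPolynomial.X (Sum.inl i) * MvPolynomial.X (Sum.inr a) -
              MvPolynomial.X (Sum.inl j) * MvPolynomial.X (Sum.inr b)) := by
  classical
  refine ⟨{g | g ∈ reesP K (LSeg u v d) ∧
    ((∃ a b c e : ↥(LSeg u v d),
      g = MvPolynomial.X (Sum.inr a) * MvPolynomial.X (Sum.inr b) -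
          MvPolynomial.X (Sum.inr c) * MvPolynomial.X (Sum.inr e)) ∨
    (∃ (i j : Fin n) (a b : ↥(LSeg u v d)),
      g = MvPolynomial.X (Sum.inl i) * MvPolynomial.X (Sum.inr a) -
          MvPolynomial.X (Sum.inl j) * MvPolynomial.X (Sum.inr b)))},
    fun g hg => hg.1, ?_, fun g hg => hg.2⟩
  intro f hf hf0
  obtain ⟨m, hm⟩ := exists_isLeadMon hf0
  obtain ⟨m', hm', hne, hdeg, himg⟩ := exists_fiber_ne hf hm.1
  -- It suffices to find a quadratic binomial of `P` whose larger term divides `m`.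
  suffices hsuff : ∃ A A' : (Fin n ⊕ ↥(LSeg u v d)) →₀ ℕ, RLT A' A ∧ A ≤ m ∧
      edeg (tPart A) = edeg (tPart A') ∧ img A = img A' ∧
      ((∃ a b c e : ↥(LSeg u v d),
        A = Finsupp.single (Sum.inr a) 1 + Finsupp.single (Sum.inr b) 1 ∧
        A' = Finsupp.single (Sum.inr c) 1 + Finsupp.single (Sum.inr e) 1) ∨
      (∃ (i j : Fin n) (a b : ↥(LSeg u v d)),
        A = Finsupp.single (Sum.inl i) 1 + Finsupp.single (Sum.inr a) 1 ∧
        A' = Finsupp.single (Sum.inl j) 1 + Finsupp.single (Sum.inr b) 1)) by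
    obtain ⟨A, A', hlt, hle, h1, h2, h3⟩ := hsuff
    have hAA : A' ≠ A := fun h => not_prodLT_self A (by rw [h] at hlt; exact hlt)
    have hlead := isLeadMon_binomial (K := K) hAA hlt
    refine ⟨_, ⟨binomial_mem_reesP K h1 h2, ?_⟩, fun h => ?_, A, m, hlead, hm, hle⟩
    · refine h3.imp ?_ ?_
      · rintro ⟨a, b, c, e, rfl, rfl⟩
        exact ⟨a, b, c, e, by simp [MvPolynomial.X, MvPolynomial.monomial_mul]⟩
      · rintro ⟨i, j, a, b, rfl, rfl⟩
        exact ⟨i, j, a, b, by simp [MvPolynomial.X, MvPolynomial.monomial_mul]⟩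
    · have := hlead.1
      rw [h] at this
      simp at this
  rcases hm.2 m' hm' hne with hS | ⟨hS, hT⟩
  · obtain ⟨i, j, w, w', hji, hai, hew, heq⟩ :=
      exists_S_move (by omega) (by omega) (by omega) (by omega) hln hv hdeg himg hS
    rw [sPart_apply] at hai
    rw [tPart_apply] at hew
    refine ⟨Finsupp.single (Sum.inl i) 1 + Finsupp.single (Sum.inr w) 1,
      Finsupp.single (Sum.inl j) 1 + Finsupp.single (Sum.inr w') 1, Or.inl ?_, ?_, ?_, ?_,
      Or.inr ⟨i, j, w, w', rfl, rfl⟩⟩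
    · rw [sPart_add, sPart_add, sPart_inl, sPart_inl, sPart_inr, sPart_inr, add_zero, add_zero]
      refine Or.inr ⟨by rw [mdeg_single, mdeg_single], i, fun t ht => ?_, ?_⟩
      · simp [ht.ne, (hji.trans ht).ne]
      · simp [hji.ne]
    · rw [Finsupp.le_def]
      rintro (k | b)
      · by_cases hk : i = k
        · subst hk; simpa using Nat.succ_le_of_lt hai
        · simp [hk]
      · by_cases hb : w = b
        · subst hb; simpa using Nat.succ_le_of_lt hew
        · simp [hb]
    · simp only [tPart_add, tPart_inl, tPart_inr, edeg_add, edeg_single]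
    · simp only [img, sPart_add, sPart_inl, sPart_inr, tPart_add, tPart_inl, tPart_inr, zero_add,
        add_zero, expandB_single, one_smul]
      exact heq
  · have himg' : expandB (tPart m') = expandB (tPart m) := by
      rw [img, img, hS] at himg
      exact add_left_cancel himg
    obtain ⟨w, w', y, z, hww, hw, hw', hyz, hyw, hzw⟩ := exists_T_move hdeg himg' hT
    rw [tPart_apply] at hw hw'
    refine ⟨Finsupp.single (Sum.inr w) 1 + Finsupp.single (Sum.inr w') 1,
      Finsupp.single (Sum.inr y) 1 + Finsupp.single (Sum.inr z) 1, Or.inr ⟨?_, ?_⟩, ?_, ?_, ?_,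
      Or.inl ⟨w, w', y, z, rfl, rfl⟩⟩
    · simp only [sPart_add, sPart_inr]
    · simp only [tPart_add, tPart_inr]
      have hne1 : ∀ x x' : ↥(LSeg u v d), LexLT (x : Mon n) x' → x ≠ x' := fun x x' h h' =>
        not_lexLT_self _ (h' ▸ h)
      -- the orders are compared at the larger of `w` and `w'`
      by_cases hcmp : LexLT (w : Mon n) (w' : Mon n)
      · refine ⟨w', ?_, fun b hb => ?_⟩
        · simp [hww, hne1 _ _ (hyw.trans hcmp), hne1 _ _ (hzw.trans hcmp)]
        · simp [hne1 _ _ hb, hne1 _ _ (hcmp.trans hb),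
            hne1 _ _ ((hyw.trans hcmp).trans hb), hne1 _ _ ((hzw.trans hcmp).trans hb)]
      · have hcmp' : LexLT (w' : Mon n) (w : Mon n) := by
          rcases lexLT_trichotomy (w : Mon n) (w' : Mon n) with h | h | h
          · exact absurd h hcmp
          · exact absurd (Subtype.ext h) hww
          · exact h
        refine ⟨w, ?_, fun b hb => ?_⟩
        · simp [hne1 _ _ hyw, hne1 _ _ hzw]
        · simp [hne1 _ _ hb, hne1 _ _ (hcmp'.trans hb),
            hne1 _ _ (hyw.trans hb), hne1 _ _ (hzw.trans hb)]
    · rw [Finsupp.le_def]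
      rintro (k | b)
      · simp
      · by_cases hb : w = b
        · subst hb
          simpa [Finsupp.single_apply, Ne.symm hww] using Nat.succ_le_of_lt hw
        · by_cases hb' : w' = b
          · subst hb'
            simpa [Finsupp.single_apply, hww] using Nat.succ_le_of_lt hw'
          · simp [hb, hb']
    · simp only [tPart_add, tPart_inr, edeg_add, edeg_single]
    · simp only [img, sPart_add, sPart_inr, tPart_add, tPart_inr, zero_add, expandB_add,
        expandB_single, one_smul]
      exact hyz.symm
end
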